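/- For every integer n ≥ 2 there exist T > 0 and a smooth T-periodic curve γ(t) = (x(t), y(t)) with x(t) > 0, y(t) > 0 and x'(t)² + y'(t)² = 1 for all t, such that γ restricted to [0, T) is injective, γ is a solution of the self-shrinker profile equation with m = n, and the image of γ is invariant under the reflection (x, y) ↦ (y, x). (This curve is the profile curve of a closed embedded SO(n)×SO(n)-invariant mean curvature self-shrinker in ℝ^{2n} diffeomorphic to S^{n−1}×S^{n−1}×S^1.) -/

import Mathlib

/-!
Write the curve in logarithmic polar coordinates about the diagonal,
`(x, y) = eˢ (cos (π / 4 + η), sin (π / 4 + η))`, and let `χ` be the angle between its velocity and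
the inward radial direction. The profile equation becomes an autonomous system in `(s, η, χ)`,
which is invariant under the reflection `(s, η, χ, t) ↦ (s, -η, π - χ, -t)` in the diagonal `η = 0`.
Hence an orbit that leaves the diagonal perpendicularly and later meets it perpendicularly again
closes up, after reflection, to a periodic orbit.

Such an orbit is found by shooting from the points of the diagonal outside the round sphere
`e²ˢ = 2 (2N + 1)`. The orbit starts away from the diagonal, turns towards the origin and then back
to the diagonal. Started close to the sphere, it turns past the perpendicular direction before
reaching the diagonal; started far away, it crosses the diagonal before it has turned that far. Both
behaviours are open conditions on the starting point, so by connectedness some orbit in between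
does neither, and it reaches the diagonal perpendicularly.
-/

namespace ShrinkerProfile

open Real Set

section Calculus

lemma exists_first_mem {Z : Set ℝ} (hZ : IsClosed Z) {a b : ℝ} (hab : a ≤ b) (hb : b ∈ Z) :
    ∃ t ∈ Icc a b, t ∈ Z ∧ ∀ u ∈ Ico a t, u ∉ Z := by
  obtain ⟨t, ⟨htab, htZ⟩, ht⟩ :=
    (isCompact_Icc.inter_right hZ).exists_isLeast ⟨b, right_mem_Icc.2 hab, hb⟩
  exact ⟨t, htab, htZ, fun u hu huZ =>
    hu.2.not_ge (ht ⟨⟨hu.1, hu.2.le.trans htab.2⟩, huZ⟩)⟩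

lemma pos_on_Icc_of_bootstrap {f : ℝ → ℝ} (hf : Continuous f) {a b : ℝ} (ha : 0 < f a)
    (hstep : ∀ t ∈ Ioc a b, (∀ u ∈ Ico a t, 0 < f u) → 0 < f t) : ∀ t ∈ Icc a b, 0 < f t := by
  intro t ht
  by_contra! hneg
  obtain ⟨u, hu, hfu, hfirst⟩ :=
    exists_first_mem (isClosed_le hf continuous_const : IsClosed {x | f x ≤ 0}) ht.1 hneg
  have hau : a < u := hu.1.lt_of_ne fun h => ha.not_ge (h ▸ hfu)
  exact (hstep u ⟨hau, hu.2.trans ht.2⟩ fun v hv => not_le.1 (hfirst v hv)).not_ge hfu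

lemma continuous_of_hasDerivAt {E : Type*} [NormedAddCommGroup E] [NormedSpace ℝ E]
    {f f' : ℝ → E} (hf : ∀ t, HasDerivAt f (f' t) t) : Continuous f :=
  continuous_iff_continuousAt.2 fun t => (hf t).continuousAt

lemma le_right_of_le_on_Ioo {f g : ℝ → ℝ} (hf : Continuous f) (hg : Continuous g) {a b : ℝ}
    (hab : a < b) (h : ∀ t ∈ Ioo a b, f t ≤ g t) : f b ≤ g b :=
  le_of_tendsto_of_tendsto (hf.continuousAt.tendsto.mono_left nhdsWithin_le_nhds)
    (hg.continuousAt.tendsto.mono_left nhdsWithin_le_nhds)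
    (Filter.mem_of_superset (Ioo_mem_nhdsLT hab) h)

lemma eventually_pos_right_of_deriv_pos {f : ℝ → ℝ} {f' a : ℝ} (hf : HasDerivAt f f' a)
    (h0 : f a = 0) (hpos : 0 < f') : ∀ᶠ t in nhdsWithin a (Ioi a), 0 < f t := by
  have hlim := (hasDerivWithinAt_iff_tendsto_slope' self_notMem_Ioi).1
    (hf.hasDerivWithinAt (s := Ioi a))
  filter_upwards [hlim.eventually_const_lt hpos, self_mem_nhdsWithin] with t hslope hat
  rw [slope_def_field, h0, sub_zero] at hslope
  exact (div_pos_iff_of_pos_right (sub_pos.2 hat)).1 hslope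

lemma exists_lt_of_deriv_le_neg {f f' : ℝ → ℝ} (hf : ∀ t, HasDerivAt f (f' t) t) {a q : ℝ}
    (hq : 0 < q) (hle : ∀ t > a, f' t ≤ -q) (c : ℝ) : ∃ t ≥ a, f t < c := by
  have hlinear : ∀ t ≥ a, f t - f a ≤ -q * (t - a) := fun t ht =>
    Convex.image_sub_le_mul_sub_of_deriv_le (convex_Ici a)
      (continuous_of_hasDerivAt hf).continuousOn
      (fun u _ => (hf u).differentiableAt.differentiableWithinAt)
      (fun u hu => (hf u).deriv.le.trans (hle u (by simpa using hu))) a self_mem_Ici t ht ht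
  have hT : 0 ≤ (|f a - c| + 1) / q := by positivity
  refine ⟨a + (|f a - c| + 1) / q, by linarith, ?_⟩
  have h := hlinear (a + (|f a - c| + 1) / q) (by linarith)
  have : q * ((|f a - c| + 1) / q) = |f a - c| + 1 := by field_simp
  nlinarith [le_abs_self (f a - c)]

lemma pos_of_hasDerivAt_mul_self {f g : ℝ → ℝ} (hg : Continuous g)
    (hf : ∀ t, HasDerivAt f (g t * f t) t) {a : ℝ} (ha : 0 < f a) (t : ℝ) :
    0 < f t := by
  set G : ℝ → ℝ := fun t => ∫ u in (0 : ℝ)..t, g u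
  have hG : ∀ t, HasDerivAt G (g t) t := fun t => (hg.integral_hasStrictDerivAt 0 t).hasDerivAt
  have hconst : ∀ t, HasDerivAt (fun t => f t * exp (-G t)) 0 t := fun t =>
    ((hf t).mul (hG t).neg.exp).congr_deriv (by simp; ring)
  have h := is_const_of_deriv_eq_zero (fun t => (hconst t).differentiableAt)
    (fun t => (hconst t).deriv) t a
  have hpos : 0 < f t * exp (-G t) := by rw [h]; positivity
  exact pos_of_mul_pos_left hpos (exp_pos _).le

lemma abs_lt_pi_div_two_of_cos_ne_zero {f : ℝ → ℝ} (hf : Continuous f) {a : ℝ}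
    (ha : |f a| < π / 2) (hcos : ∀ t, cos (f t) ≠ 0) (t : ℝ) : |f t| < π / 2 := by
  by_contra! ht
  obtain ⟨u, hu⟩ := mem_range_of_exists_le_of_exists_ge hf.abs ⟨a, ha.le⟩ ⟨t, ht⟩
  have hu' : |f u| = π / 2 := hu
  exact hcos u (by rw [← cos_abs, hu', cos_pi_div_two])

/-- `HasRate w f f'` says `df = f' dσ` along the clock `dσ = w dt`. Comparing such rates of two
functions compares their increments, whatever the positive speed `w` of the clock is. -/
def HasRate (w f f' : ℝ → ℝ) : Prop := ∀ t, HasDerivAt f (w t * f' t) t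

namespace HasRate

variable {w f f' g g' : ℝ → ℝ}

lemma continuous (hf : HasRate w f f') : Continuous f := continuous_of_hasDerivAt hf

lemma congr_rate (hf : HasRate w f f') (h : ∀ t, f' t = g' t) : HasRate w f g' :=
  funext h ▸ hf

lemma comp {φ φ' : ℝ → ℝ} (hφ : ∀ x, HasDerivAt φ (φ' x) x) (hf : HasRate w f f') :
    HasRate w (fun t => φ (f t)) (fun t => φ' (f t) * f' t) := fun t =>
  ((hφ (f t)).comp t (hf t)).congr_deriv (by ring)

lemma add (hf : HasRate w f f') (hg : HasRate w g g') :
    HasRate w (fun t => f t + g t) (fun t => f' t + g' t) := fun t =>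
  ((hf t).add (hg t)).congr_deriv (by ring)

lemma mul (hf : HasRate w f f') (hg : HasRate w g g') :
    HasRate w (fun t => f t * g t) (fun t => f' t * g t + f t * g' t) := fun t =>
  ((hf t).mul (hg t)).congr_deriv (by ring)

lemma const_mul (c : ℝ) (hf : HasRate w f f') :
    HasRate w (fun t => c * f t) (fun t => c * f' t) := fun t =>
  ((hf t).const_mul c).congr_deriv (by ring)

lemma sub_le_sub (hf : HasRate w f f') (hg : HasRate w g g') (hw : ∀ t, 0 < w t) {a b : ℝ}
    (hab : a ≤ b) (h : ∀ t ∈ Ioo a b, f' t ≤ g' t) : f b - f a ≤ g b - g a := by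
  have hd : ∀ t, HasDerivAt (fun t => g t - f t) (w t * (g' t - f' t)) t := fun t =>
    ((hg t).sub (hf t)).congr_deriv (by ring)
  have hmono : MonotoneOn (fun t => g t - f t) (Icc a b) := by
    refine monotoneOn_of_deriv_nonneg (convex_Icc a b)
      (continuous_of_hasDerivAt hd).continuousOn
      (fun t _ => (hd t).differentiableAt.differentiableWithinAt) fun t ht => ?_
    rw [interior_Icc] at ht
    rw [(hd t).deriv]
    exact mul_nonneg (hw t).le (sub_nonneg.2 (h t ht))
  have := hmono (left_mem_Icc.2 hab) (right_mem_Icc.2 hab) hab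
  simp only at this
  linarith

lemma le_of_nonneg (hf : HasRate w f f') (hw : ∀ t, 0 < w t) {a b : ℝ} (hab : a ≤ b)
    (h : ∀ t ∈ Ioo a b, 0 ≤ f' t) : f a ≤ f b := by
  have h0 : HasRate w (fun _ => (0 : ℝ)) fun _ => 0 := fun t => by
    simpa using hasDerivAt_const t (0 : ℝ)
  linarith [h0.sub_le_sub hf hw hab h]

lemma le_of_nonpos (hf : HasRate w f f') (hw : ∀ t, 0 < w t) {a b : ℝ} (hab : a ≤ b)
    (h : ∀ t ∈ Ioo a b, f' t ≤ 0) : f b ≤ f a := by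
  have h0 : HasRate w (fun _ => (0 : ℝ)) fun _ => 0 := fun t => by
    simpa using hasDerivAt_const t (0 : ℝ)
  linarith [hf.sub_le_sub h0 hw hab h]

lemma lt_of_pos (hf : HasRate w f f') (hw : ∀ t, 0 < w t) {a b : ℝ} (hab : a < b)
    (h : ∀ t ∈ Ioo a b, 0 < f' t) : f a < f b := by
  refine strictMonoOn_of_deriv_pos (convex_Icc a b) hf.continuous.continuousOn (fun t ht => ?_)
    (left_mem_Icc.2 hab.le) (right_mem_Icc.2 hab.le) hab
  rw [interior_Icc] at ht
  rw [(hf t).deriv]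
  exact mul_pos (hw t) (h t ht)

lemma comp_reparametrisation {q : ℝ → ℝ} (hf : HasRate w f f')
    (hw : ∀ t, 0 < w t) (hq : ∀ t, HasDerivAt q (w (q t))⁻¹ t) (t : ℝ) :
    HasDerivAt (fun t => f (q t)) (f' (q t)) t :=
  ((hf (q t)).comp t (hq t)).congr_deriv <| by field_simp [(hw (q t)).ne']

end HasRate

end Calculus

section BoundedLipschitz

variable {X E F : Type*} [PseudoMetricSpace X] [NormedAddCommGroup E] [NormedAddCommGroup F]

/-- Bounded Lipschitz maps. Unlike Lipschitz maps they are stable under products, and as vector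
fields they have integral curves defined for all times. -/
def IsBoundedLipschitz (f : X → E) : Prop :=
  ∃ L K : NNReal, (∀ x, ‖f x‖ ≤ L) ∧ LipschitzWith K f

namespace IsBoundedLipschitz

lemma const (c : E) : IsBoundedLipschitz fun _ : X => c :=
  ⟨‖c‖₊, 0, fun _ => le_rfl, .const c⟩

lemma comp_lipschitz {Y : Type*} [PseudoMetricSpace Y] {f : Y → E} (hf : IsBoundedLipschitz f)
    {g : X → Y} {K : NNReal} (hg : LipschitzWith K g) : IsBoundedLipschitz fun x => f (g x) := by
  obtain ⟨L, K', hb, hl⟩ := hf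
  exact ⟨L, K' * K, fun x => hb (g x), hl.comp hg⟩

lemma add {f g : X → E} (hf : IsBoundedLipschitz f) (hg : IsBoundedLipschitz g) :
    IsBoundedLipschitz fun x => f x + g x := by
  obtain ⟨L, K, hb, hl⟩ := hf
  obtain ⟨L', K', hb', hl'⟩ := hg
  exact ⟨L + L', K + K', fun x => (norm_add_le _ _).trans (add_le_add (hb x) (hb' x)),
    hl.add hl'⟩

lemma neg {f : X → E} (hf : IsBoundedLipschitz f) : IsBoundedLipschitz fun x => -f x := by
  obtain ⟨L, K, hb, hl⟩ := hf
  exact ⟨L, K, fun x => (norm_neg _).trans_le (hb x), hl.neg⟩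

lemma mul {f g : X → ℝ} (hf : IsBoundedLipschitz f) (hg : IsBoundedLipschitz g) :
    IsBoundedLipschitz fun x => f x * g x := by
  obtain ⟨L, K, hb, hl⟩ := hf
  obtain ⟨L', K', hb', hl'⟩ := hg
  refine ⟨L * L', K * L' + L * K', fun x => ?_, .of_dist_le_mul fun x y => ?_⟩
  · rw [norm_mul, NNReal.coe_mul]
    gcongr
    exacts [hb x, hb' x]
  · rw [Real.dist_eq, show f x * g x - f y * g y = (f x - f y) * g x + f y * (g x - g y) by ring]
    calc |(f x - f y) * g x + f y * (g x - g y)|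
        ≤ |f x - f y| * |g x| + |f y| * |g x - g y| := by
          simpa only [abs_mul] using abs_add_le ((f x - f y) * g x) (f y * (g x - g y))
      _ ≤ K * dist x y * L' + L * (K' * dist x y) := by
          gcongr
          exacts [hl.dist_le_mul x y, hb' x, hb y, hl'.dist_le_mul x y]
      _ = ↑(K * L' + L * K') * dist x y := by push_cast; ring

lemma prodMk {f : X → E} {g : X → F} (hf : IsBoundedLipschitz f) (hg : IsBoundedLipschitz g) :
    IsBoundedLipschitz fun x => (f x, g x) := by
  obtain ⟨L, K, hb, hl⟩ := hf
  obtain ⟨L', K', hb', hl'⟩ := hg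
  exact ⟨max L L', max K K', fun x => max_le_max (hb x) (hb' x), hl.prodMk hl'⟩

end IsBoundedLipschitz

lemma isBoundedLipschitz_cos : IsBoundedLipschitz cos :=
  ⟨1, 1, fun x => by simpa using abs_cos_le_one x, lipschitzWith_cos⟩

lemma isBoundedLipschitz_sin : IsBoundedLipschitz sin :=
  ⟨1, 1, fun x => by simpa using abs_sin_le_one x, lipschitzWith_sin⟩

lemma isBoundedLipschitz_sigmoid : IsBoundedLipschitz sigmoid := by
  refine ⟨1, 1, fun x => ?_, lipschitzWith_of_nnnorm_deriv_le differentiable_sigmoid fun x => ?_⟩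
  · simpa [abs_of_pos (sigmoid_pos x)] using sigmoid_le_one x
  · rw [← NNReal.coe_le_coe, coe_nnnorm, deriv_sigmoid, Real.norm_eq_abs, NNReal.coe_one, abs_le]
    constructor <;> nlinarith [sigmoid_pos x, sigmoid_lt_one x]

end BoundedLipschitz

section IntegralCurves

variable {E : Type*} [NormedAddCommGroup E] [NormedSpace ℝ E] {v : E → E} {K : NNReal}

lemma exists_isIntegralCurve [CompleteSpace E] (hv : IsBoundedLipschitz v) (x₀ : E) :
    ∃ γ : ℝ → E, γ 0 = x₀ ∧ IsIntegralCurve γ fun _ => v := by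
  obtain ⟨L, K, hbdd, hlip⟩ := hv
  have hlocal : ∀ a : ℝ, 0 < a → ∃ γ : ℝ → E, γ 0 = x₀ ∧
      ∀ t ∈ Ioo (-a) a, HasDerivAt γ (v (γ t)) t := by
    intro a ha
    have hpl : IsPicardLindelof (fun _ => v) (⟨0, by simp [ha.le]⟩ : Icc (-a) a) x₀
        (L * a.toNNReal) 0 L K :=
      .of_time_independent (fun x _ => hbdd x) hlip.lipschitzOnWith (by simp [ha.le])
    obtain ⟨γ, h0, hγ⟩ := hpl.exists_eq_forall_mem_Icc_hasDerivWithinAt₀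
    exact ⟨γ, h0, fun t ht => (hγ t (Ioo_subset_Icc_self ht)).hasDerivAt (Icc_mem_nhds ht.1 ht.2)⟩
  choose! γ h0 hγ using hlocal
  have hagree : ∀ a b : ℝ, 0 < a → a ≤ b → EqOn (γ a) (γ b) (Ioo (-a) a) := fun a b ha hab =>
    ODE_solution_unique_of_mem_Ioo (v := fun _ => v) (s := fun _ => univ) (t₀ := 0)
      (fun _ _ => hlip.lipschitzOnWith) (by simp [ha])
      (fun t ht => ⟨hγ a ha t ht, trivial⟩)
      (fun t ht => ⟨hγ b (ha.trans_le hab) t ⟨by linarith [ht.1], by linarith [ht.2]⟩, trivial⟩)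
      (by rw [h0 a ha, h0 b (ha.trans_le hab)])
  have hglue : ∀ a > 0, EqOn (fun t => γ (|t| + 1) t) (γ a) (Ioo (-a) a) := fun a ha t ht => by
    rcases le_total (|t| + 1) a with h | h
    · exact hagree _ _ (by positivity) h (abs_lt.1 (lt_add_one _))
    · exact (hagree a _ ha h ht).symm
  refine ⟨fun t => γ (|t| + 1) t, h0 _ (by positivity), fun t => ?_⟩
  have ht : t ∈ Ioo (-(|t| + 1)) (|t| + 1) := abs_lt.1 (lt_add_one _)
  exact (hγ _ (by positivity) t ht).congr_of_eventuallyEq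
    ((hglue _ (by positivity)).eventuallyEq_of_mem (Ioo_mem_nhds ht.1 ht.2))

lemma dist_le_of_isIntegralCurve (hlip : LipschitzWith K v) {γ γ' : ℝ → E}
    (hγ : IsIntegralCurve γ fun _ => v) (hγ' : IsIntegralCurve γ' fun _ => v) {t : ℝ}
    (ht : 0 ≤ t) : dist (γ t) (γ' t) ≤ dist (γ 0) (γ' 0) * exp (K * t) := by
  simpa using dist_le_of_trajectories_ODE (v := fun _ => v) (fun _ => hlip)
    hγ.continuous.continuousOn (fun t _ => (hγ t).hasDerivWithinAt)
    hγ'.continuous.continuousOn (fun t _ => (hγ' t).hasDerivWithinAt) le_rfl t ⟨ht, le_rfl⟩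

lemma dist_le_of_isIntegralCurve_abs (hlip : LipschitzWith K v) {γ γ' : ℝ → E}
    (hγ : IsIntegralCurve γ fun _ => v) (hγ' : IsIntegralCurve γ' fun _ => v) (t : ℝ) :
    dist (γ t) (γ' t) ≤ dist (γ 0) (γ' 0) * exp (K * |t|) := by
  rcases le_total 0 t with ht | ht
  · simpa [abs_of_nonneg ht] using dist_le_of_isIntegralCurve hlip hγ hγ' ht
  · have hneg : LipschitzWith K fun x => -v x := hlip.neg
    have hrev : ∀ {δ : ℝ → E}, IsIntegralCurve δ (fun _ => v) →
        IsIntegralCurve (fun t => δ (-t)) fun _ x => -v x := fun hδ => by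
      simpa [Function.comp_def, IsIntegralCurve] using hδ.comp_mul (-1)
    simpa [abs_of_nonpos ht] using
      dist_le_of_isIntegralCurve hneg (hrev hγ) (hrev hγ') (neg_nonneg.2 ht)

lemma continuous_flow (hlip : LipschitzWith K v) {Φ : E → ℝ → E} (h0 : ∀ x, Φ x 0 = x)
    (hΦ : ∀ x, IsIntegralCurve (Φ x) fun _ => v) : Continuous fun p : E × ℝ => Φ p.1 p.2 := by
  have hlocal : ∀ R : ℝ,
      ContinuousOn (fun p : E × ℝ => Φ p.1 p.2) (univ ×ˢ Ioo (-R) R) := fun R =>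
    continuousOn_prod_of_continuousOn_lipschitzOnWith _ (Real.toNNReal (exp (K * R)))
      (fun x _ => (hΦ x).continuous.continuousOn) fun t ht =>
      LipschitzOnWith.of_dist_le_mul fun x _ y _ => by
        have h := dist_le_of_isIntegralCurve_abs hlip (hΦ x) (hΦ y) t
        rw [h0, h0] at h
        rw [Real.coe_toNNReal _ (exp_pos _).le, mul_comm]
        exact h.trans (by gcongr; exact (abs_lt.2 ht).le)
  refine continuous_iff_continuousAt.2 fun ⟨x, t⟩ =>
    (hlocal (|t| + 1)).continuousAt (prod_mem_nhds Filter.univ_mem ?_)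
  exact Ioo_mem_nhds (by linarith [neg_abs_le t]) (by linarith [le_abs_self t])

lemma isIntegralCurve_unique (hlip : LipschitzWith K v) {γ γ' : ℝ → E}
    (hγ : IsIntegralCurve γ fun _ => v) (hγ' : IsIntegralCurve γ' fun _ => v) {t₀ : ℝ}
    (h : γ t₀ = γ' t₀) : γ = γ' :=
  ODE_solution_unique_univ (v := fun _ => v) (s := fun _ => univ)
    (fun _ => hlip.lipschitzOnWith) (fun t => ⟨hγ t, trivial⟩) (fun t => ⟨hγ' t, trivial⟩) h

lemma contDiff_of_isIntegralCurve (hv : ContDiff ℝ (⊤ : ℕ∞) v) {γ : ℝ → E}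
    (hγ : IsIntegralCurve γ fun _ => v) : ContDiff ℝ (⊤ : ℕ∞) γ := by
  have hderiv : deriv γ = v ∘ γ := funext fun t => (hγ t).deriv
  refine contDiff_infty.2 fun n => ?_
  induction n with
  | zero => exact contDiff_zero.2 hγ.continuous
  | succ n ih =>
    push_cast
    refine contDiff_succ_iff_deriv.2 ⟨fun t => (hγ t).differentiableAt, by simp, ?_⟩
    exact hderiv ▸ (hv.of_le (by exact_mod_cast le_top)).comp ih

end IntegralCurves

section ExitsFirst

/-- From time `0` on, `f` becomes negative at a moment up to which `g` has stayed positive. -/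
def ExitsFirst (f g : ℝ → ℝ) : Prop := ∃ t ≥ 0, f t < 0 ∧ ∀ u ∈ Icc 0 t, 0 < g u

lemma ExitsFirst.not_swap {f g : ℝ → ℝ} (h : ExitsFirst f g) : ¬ ExitsFirst g f := by
  rintro ⟨u, hu, hgu, hf⟩
  obtain ⟨t, ht, hft, hg⟩ := h
  rcases le_total t u with htu | hut
  · exact hft.not_gt (hf t ⟨ht, htu⟩)
  · exact hgu.not_gt (hg u ⟨hu, hut⟩)

lemma exitsFirst_of_eventually_neg {f g : ℝ → ℝ} (hg : Continuous g) {T : ℝ} (hT : 0 ≤ T)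
    (hpos : ∀ u ∈ Icc 0 T, 0 < g u) (hneg : ∀ᶠ t in nhdsWithin T (Ioi T), f t < 0) :
    ExitsFirst f g := by
  have hgT : ∀ᶠ t in nhdsWithin T (Ioi T), 0 < g t :=
    nhdsWithin_le_nhds (hg.continuousAt.eventually_const_lt (hpos T ⟨hT, le_rfl⟩))
  obtain ⟨b, hTb, hb⟩ := mem_nhdsGT_iff_exists_Ioo_subset.1 (hneg.and hgT)
  obtain ⟨t, hTt, htb⟩ := exists_between (mem_Ioi.1 hTb)
  refine ⟨t, hT.trans hTt.le, (hb ⟨hTt, htb⟩).1, fun u hu => ?_⟩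
  rcases le_or_gt u T with h | h
  · exact hpos u ⟨hu.1, h⟩
  · exact (hb ⟨h, hu.2.trans_lt htb⟩).2

variable {X : Type*} [TopologicalSpace X] {f g : X → ℝ → ℝ}

lemma isOpen_setOf_exitsFirst (hf : Continuous fun p : X × ℝ => f p.1 p.2)
    (hg : Continuous fun p : X × ℝ => g p.1 p.2) : IsOpen {a | ExitsFirst (f a) (g a)} := by
  refine isOpen_iff_mem_nhds.2 fun a ⟨t, ht, hft, hgt⟩ => ?_
  have hfa : ∀ᶠ b in nhds a, f b t < 0 :=
    (hf.comp (continuous_id.prodMk continuous_const)).continuousAt.eventually_lt_const hft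
  have hga : ∀ᶠ b in nhds a, ∀ u ∈ Icc 0 t, 0 < g b u :=
    isCompact_Icc.eventually_forall_of_forall_eventually fun u hu =>
      hg.continuousAt.eventually_const_lt (hgt u hu)
  filter_upwards [hfa, hga] with b hfb hgb
  exact ⟨t, ht, hfb, hgb⟩

lemma exists_not_exitsFirst (hf : Continuous fun p : X × ℝ => f p.1 p.2)
    (hg : Continuous fun p : X × ℝ => g p.1 p.2) {S : Set X} (hS : IsPreconnected S) {a b : X}
    (ha : a ∈ S) (hfa : ExitsFirst (f a) (g a)) (hb : b ∈ S) (hgb : ExitsFirst (g b) (f b)) :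
    ∃ c ∈ S, ¬ ExitsFirst (f c) (g c) ∧ ¬ ExitsFirst (g c) (f c) := by
  by_contra! h
  obtain ⟨c, -, hc, hc'⟩ := hS _ _ (isOpen_setOf_exitsFirst hf hg) (isOpen_setOf_exitsFirst hg hf)
    (fun c hc => or_iff_not_imp_left.2 (h c hc)) ⟨a, ha, hfa⟩ ⟨b, hb, hgb⟩
  exact hc.not_swap hc'

end ExitsFirst

section Reparametrisation

lemma exists_periodic_reparametrisation {f : ℝ → ℝ} {p : ℝ} (hp : 0 < p)
    (hf : ContDiff ℝ (⊤ : ℕ∞) f) (hpos : ∀ t, 0 < f t) (hper : Function.Periodic f p) :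
    ∃ (q : ℝ ≃o ℝ) (T : ℝ), 0 < T ∧ ContDiff ℝ (⊤ : ℕ∞) q ∧
      (∀ t, HasDerivAt q (f (q t))⁻¹ t) ∧ (∀ t, q (t + T) = q t + p) ∧ q 0 = 0 := by
  have hint : ∀ a b, IntervalIntegrable f MeasureTheory.volume a b := fun a b =>
    hf.continuous.intervalIntegrable a b
  set F : ℝ → ℝ := fun t => ∫ u in (0 : ℝ)..t, f u with hF
  have hF0 : F 0 = 0 := intervalIntegral.integral_same
  have hF' : ∀ t, HasDerivAt F (f t) t := fun t =>
    (hf.continuous.integral_hasStrictDerivAt 0 t).hasDerivAt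
  have hmono : StrictMono F := strictMono_of_deriv_pos fun t => (hF' t).deriv.symm ▸ hpos t
  have hsmooth : ContDiff ℝ (⊤ : ℕ∞) F := contDiff_infty_iff_deriv.2
    ⟨fun t => (hF' t).differentiableAt, (funext fun t => (hF' t).deriv : deriv F = f) ▸ hf⟩
  have hsurj : Function.Surjective F := hsmooth.continuous.surjective
    (hper.tendsto_atTop_intervalIntegral_of_pos' (hint _ _) hpos hp)
    (hper.tendsto_atBot_intervalIntegral_of_pos' (hint _ _) hpos hp)
  have hadd : ∀ t, F (t + p) = F t + F p := fun t => by
    simp only [hF]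
    rw [← intervalIntegral.integral_add_adjacent_intervals (hint 0 t) (hint t (t + p)),
      hper.intervalIntegral_add_eq t 0, zero_add]
  set e : ℝ ≃o ℝ := hmono.orderIsoOfSurjective F hsurj
  have hinv : ∀ t, F (e.symm t) = t := e.apply_symm_apply
  refine ⟨e.symm, F p, ?_, ?_, fun t => ?_, fun t => ?_, ?_⟩
  · exact hF0 ▸ hmono hp
  · exact e.toHomeomorph.contDiff_symm_deriv (fun t => (hpos t).ne') hF' hsmooth
  · exact .of_local_left_inverse e.symm.continuous.continuousAt (hF' _) (hpos _).ne'
      (.of_forall hinv)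
  · rw [e.symm_apply_eq, show e (e.symm t + p) = F (e.symm t + p) from rfl, hadd, hinv]
  · rw [e.symm_apply_eq, show e 0 = F 0 from rfl, hF0]

end Reparametrisation

section PlaneCurves

section DirectionAngle

variable {x y α κ : ℝ → ℝ} (hx : ∀ t, HasDerivAt x (cos (α t)) t)
  (hy : ∀ t, HasDerivAt y (sin (α t)) t)
include hx hy

lemma deriv_sq_add_deriv_sq (t : ℝ) : deriv x t ^ 2 + deriv y t ^ 2 = 1 := by
  rw [(hx t).deriv, (hy t).deriv, cos_sq_add_sin_sq]

lemma curvature_eq_deriv_angle (hα : ∀ t, HasDerivAt α (κ t) t) (t : ℝ) :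
    -(deriv (deriv x) t) * deriv y t + deriv x t * deriv (deriv y) t = κ t := by
  have hx' : deriv x = fun t => cos (α t) := funext fun t => (hx t).deriv
  have hy' : deriv y = fun t => sin (α t) := funext fun t => (hy t).deriv
  rw [hx', hy', (hα t).cos.deriv, (hα t).sin.deriv]
  linear_combination κ t * sin_sq_add_cos_sq (α t)

end DirectionAngle

lemma injOn_polar : InjOn (fun z : ℝ × ℝ =>
    (exp z.1 * cos (π / 4 + z.2), exp z.1 * sin (π / 4 + z.2))) {z | |z.2| < π / 4} := by
  rintro ⟨s, η⟩ hη ⟨s', η'⟩ hη' heq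
  obtain ⟨hcos, hsin⟩ := Prod.mk.inj heq
  have hsq : exp s ^ 2 = exp s' ^ 2 := by
    calc exp s ^ 2 = (exp s * cos (π / 4 + η)) ^ 2 + (exp s * sin (π / 4 + η)) ^ 2 := by
          linear_combination -exp s ^ 2 * cos_sq_add_sin_sq (π / 4 + η)
      _ = (exp s' * cos (π / 4 + η')) ^ 2 + (exp s' * sin (π / 4 + η')) ^ 2 := by
          rw [hcos, hsin]
      _ = exp s' ^ 2 := by linear_combination exp s' ^ 2 * cos_sq_add_sin_sq (π / 4 + η')
  have hs : s = s' :=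
    exp_injective ((pow_left_inj₀ (exp_pos s).le (exp_pos s').le two_ne_zero).1 hsq)
  subst hs
  have h : -(π / 4) < η ∧ η < π / 4 := abs_lt.1 hη
  have h' : -(π / 4) < η' ∧ η' < π / 4 := abs_lt.1 hη'
  have := injOn_cos ⟨by linarith, by linarith⟩ ⟨by linarith, by linarith⟩
    (mul_left_cancel₀ (exp_pos s).ne' hcos)
  exact Prod.ext rfl (add_left_cancel this)

end PlaneCurves

section Orbits

/-- The coefficient of `sin χ` in the profile system: `2N + 1 - r² / 2` at distance `r = eˢ` from
the origin. It vanishes on the round sphere. -/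
noncomputable def radialForce (N : ℕ) (s : ℝ) : ℝ := 2 * N + 1 - exp (2 * s) / 2

/-- The speed at which the profile system is run. The factor `cos (2η)` removes the singularity on
the coordinate axes and `sigmoid (-2s) = 1 / (1 + r²)` makes the vector field bounded. -/
noncomputable def clockSpeed (s η : ℝ → ℝ) (t : ℝ) : ℝ := sigmoid (-2 * s t) * cos (2 * η t)

/-- The profile equation with `m = n = N + 1` in logarithmic polar coordinates
`(x, y) = eˢ (cos (π / 4 + η), sin (π / 4 + η))`; the velocity has direction angle
`π / 4 + η + χ + π`. -/
structure ProfileOrbit (N : ℕ) (s η χ : ℝ → ℝ) : Prop where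
  abs_η_lt : ∀ t, |η t| < π / 4
  rate_s : HasRate (clockSpeed s η) s fun t => -cos (χ t)
  rate_η : HasRate (clockSpeed s η) η fun t => -sin (χ t)
  rate_χ : HasRate (clockSpeed s η) χ fun t =>
    radialForce N (s t) * sin (χ t) + 2 * N * tan (2 * η t) * cos (χ t)

/-- The integrating factor `exp ∫ radialForce` of the angle equation along rays. -/
noncomputable def radialWeight (N : ℕ) (s : ℝ) : ℝ := exp ((2 * N + 1) * s - exp (2 * s) / 4)

/-- Monotone wherever `η` has a sign. -/
noncomputable def weightedSin (N : ℕ) (s χ : ℝ → ℝ) (t : ℝ) : ℝ := radialWeight N (s t) * sin (χ t)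

/-- Monotone on either side of the round sphere. -/
noncomputable def weightedCos (N : ℕ) (η χ : ℝ → ℝ) (t : ℝ) : ℝ := cos (2 * η t) ^ N * cos (χ t)

/-- A Lyapunov function for descending orbits inside the round sphere. -/
noncomputable def weightedTurning (N : ℕ) (s η χ : ℝ → ℝ) (t : ℝ) : ℝ :=
  cos (2 * η t) ^ N * ((2 * N + 1) * sin (2 * η t) * cos (χ t)
    + radialForce N (s t) * cos (2 * η t) * sin (χ t))

/-- The primitive of `tan (2η)`. -/
noncomputable def logSec (η : ℝ → ℝ) (t : ℝ) : ℝ := -log (cos (2 * η t)) / 2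

lemma radialForce_lt (N : ℕ) (s : ℝ) : radialForce N s < 2 * N + 1 :=
  sub_lt_self _ (by positivity)

lemma strictAnti_radialForce (N : ℕ) : StrictAnti (radialForce N) := fun _ _ h => by
  unfold radialForce; gcongr

lemma exists_radialForce_eq {N : ℕ} {y : ℝ} (hy : y < 2 * N + 1) : ∃ s, radialForce N s = y := by
  refine ⟨log (2 * (2 * N + 1 - y)) / 2, ?_⟩
  rw [radialForce, mul_div_cancel₀ _ two_ne_zero, exp_log (by linarith)]
  ring

lemma radialWeight_pos (N : ℕ) (s : ℝ) : 0 < radialWeight N s := exp_pos _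

lemma hasDerivAt_radialForce (N : ℕ) (s : ℝ) :
    HasDerivAt (radialForce N) (-2 * (2 * N + 1 - radialForce N s)) s :=
  (((((hasDerivAt_id s).const_mul 2).exp.div_const 2).const_sub (2 * N + 1 : ℝ))).congr_deriv
    (by simp [radialForce]; ring)

lemma hasDerivAt_radialWeight (N : ℕ) (s : ℝ) :
    HasDerivAt (radialWeight N) (radialForce N s * radialWeight N s) s :=
  (((hasDerivAt_id s).const_mul (2 * N + 1 : ℝ)).sub
    (((hasDerivAt_id s).const_mul 2).exp.div_const 4)).exp.congr_deriv
    (by simp [radialForce, radialWeight]; ring)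

namespace ProfileOrbit

variable {N : ℕ} {s η χ : ℝ → ℝ} (h : ProfileOrbit N s η χ)
include h

lemma continuous_s : Continuous s := h.rate_s.continuous

lemma continuous_η : Continuous η := h.rate_η.continuous

lemma continuous_χ : Continuous χ := h.rate_χ.continuous

lemma cos_two_mul_pos (t : ℝ) : 0 < cos (2 * η t) := by
  have := abs_lt.1 (h.abs_η_lt t)
  exact cos_pos_of_mem_Ioo ⟨by linarith, by linarith⟩

lemma sin_two_mul_pos {t : ℝ} (ht : 0 < η t) : 0 < sin (2 * η t) := by
  have := abs_lt.1 (h.abs_η_lt t)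
  exact sin_pos_of_pos_of_lt_pi (by linarith) (by linarith)

lemma sin_two_mul_nonneg {t : ℝ} (ht : 0 ≤ η t) : 0 ≤ sin (2 * η t) := by
  have := abs_lt.1 (h.abs_η_lt t)
  exact sin_nonneg_of_nonneg_of_le_pi (by linarith) (by linarith)

lemma tan_two_mul_nonneg {t : ℝ} (ht : 0 ≤ η t) : 0 ≤ tan (2 * η t) :=
  tan_eq_sin_div_cos (2 * η t) ▸ div_nonneg (h.sin_two_mul_nonneg ht) (h.cos_two_mul_pos t).le

lemma tan_two_mul_pos {t : ℝ} (ht : 0 < η t) : 0 < tan (2 * η t) :=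
  tan_eq_sin_div_cos (2 * η t) ▸ div_pos (h.sin_two_mul_pos ht) (h.cos_two_mul_pos t)

lemma clockSpeed_pos (t : ℝ) : 0 < clockSpeed s η t := mul_pos (sigmoid_pos _) (h.cos_two_mul_pos t)

lemma rate_radialForce : HasRate (clockSpeed s η) (fun t => radialForce N (s t)) fun t =>
    2 * (2 * N + 1 - radialForce N (s t)) * cos (χ t) :=
  (h.rate_s.comp (hasDerivAt_radialForce N)).congr_rate fun t => by ring

lemma rate_radialWeight : HasRate (clockSpeed s η) (fun t => radialWeight N (s t)) fun t =>
    -(radialForce N (s t) * radialWeight N (s t) * cos (χ t)) :=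
  (h.rate_s.comp (hasDerivAt_radialWeight N)).congr_rate fun t => by ring

lemma rate_exp_mul (b : ℝ) : HasRate (clockSpeed s η) (fun t => exp (b * s t)) fun t =>
    -(b * exp (b * s t) * cos (χ t)) :=
  (h.rate_s.comp (φ := fun x => exp (b * x)) fun x =>
    ((hasDerivAt_id x).const_mul b).exp).congr_rate fun t => by dsimp only [id]; ring

lemma rate_weightedSin : HasRate (clockSpeed s η) (weightedSin N s χ) fun t =>
    2 * N * radialWeight N (s t) * tan (2 * η t) * cos (χ t) ^ 2 :=
  (h.rate_radialWeight.mul (h.rate_χ.comp hasDerivAt_sin)).congr_rate fun t => by ring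

lemma rate_cos_two_mul : HasRate (clockSpeed s η) (fun t => cos (2 * η t)) fun t =>
    2 * sin (2 * η t) * sin (χ t) :=
  (h.rate_η.comp (φ := fun x => cos (2 * x)) fun x =>
    ((hasDerivAt_id x).const_mul 2).cos).congr_rate fun t => by dsimp only [id]; ring

lemma rate_sin_two_mul : HasRate (clockSpeed s η) (fun t => sin (2 * η t)) fun t =>
    -(2 * cos (2 * η t) * sin (χ t)) :=
  (h.rate_η.comp (φ := fun x => sin (2 * x)) fun x =>
    ((hasDerivAt_id x).const_mul 2).sin).congr_rate fun t => by dsimp only [id]; ring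

lemma rate_cos_pow : HasRate (clockSpeed s η) (fun t => cos (2 * η t) ^ N) fun t =>
    2 * N * cos (2 * η t) ^ N * tan (2 * η t) * sin (χ t) := by
  refine (h.rate_cos_two_mul.comp fun x => hasDerivAt_pow N x).congr_rate fun t => ?_
  have hcos := (h.cos_two_mul_pos t).ne'
  rw [tan_eq_sin_div_cos]
  field_simp
  cases N with
  | zero => simp
  | succ N => rw [Nat.add_sub_cancel, pow_succ]; ring

lemma rate_weightedCos : HasRate (clockSpeed s η) (weightedCos N η χ) fun t =>
    -(radialForce N (s t) * cos (2 * η t) ^ N * sin (χ t) ^ 2) :=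
  (h.rate_cos_pow.mul (h.rate_χ.comp hasDerivAt_cos)).congr_rate fun t => by ring

lemma rate_logSec : HasRate (clockSpeed s η) (logSec η) fun t => -(tan (2 * η t) * sin (χ t)) :=
  fun t => ((h.rate_cos_two_mul t).log (h.cos_two_mul_pos t).ne').neg.div_const 2
    |>.congr_deriv <| by simp only [tan_eq_sin_div_cos]; ring

lemma rate_weightedTurning : HasRate (clockSpeed s η) (weightedTurning N s η χ) fun t =>
    radialForce N (s t) / (2 * N + 1) * (2 * N * cos (χ t) * weightedTurning N s η χ t
      + cos (2 * η t) ^ N * ((2 * N + 1) * sin (χ t) ^ 2 * sin (2 * η t)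
        - sin (χ t) * cos (χ t) * cos (2 * η t) * (2 * (2 * N + 1) - radialForce N (s t)))) := by
  refine (h.rate_cos_pow.mul (((h.rate_sin_two_mul.const_mul (2 * N + 1)).mul
    (h.rate_χ.comp hasDerivAt_cos)).add ((h.rate_radialForce.mul h.rate_cos_two_mul).mul
    (h.rate_χ.comp hasDerivAt_sin)))).congr_rate fun t => ?_
  have hcos := (h.cos_two_mul_pos t).ne'
  simp only [weightedTurning, tan_eq_sin_div_cos]
  field_simp
  ring

end ProfileOrbit

end Orbits

section Shots

namespace ProfileOrbit

variable {N : ℕ} {s η χ : ℝ → ℝ} (h : ProfileOrbit N s η χ) {a b : ℝ}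
include h

lemma s_le (hab : a ≤ b) (hχ : ∀ t ∈ Ioo a b, |χ t| ≤ π / 2) : s b ≤ s a :=
  h.rate_s.le_of_nonpos h.clockSpeed_pos hab fun t ht =>
    neg_nonpos.2 (cos_nonneg_of_mem_Icc (abs_le.1 (hχ t ht)))

lemma η_le (hab : a ≤ b) (hχ : ∀ t ∈ Ioo a b, 0 ≤ sin (χ t)) : η b ≤ η a :=
  h.rate_η.le_of_nonpos h.clockSpeed_pos hab fun t ht => neg_nonpos.2 (hχ t ht)

lemma le_η (hab : a ≤ b) (hχ : ∀ t ∈ Ioo a b, sin (χ t) ≤ 0) : η a ≤ η b :=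
  h.rate_η.le_of_nonneg h.clockSpeed_pos hab fun t ht => neg_nonneg.2 (hχ t ht)

lemma weightedSin_le (hab : a ≤ b) (hη : ∀ t ∈ Ioo a b, 0 ≤ η t) :
    weightedSin N s χ a ≤ weightedSin N s χ b :=
  h.rate_weightedSin.le_of_nonneg h.clockSpeed_pos hab fun t ht => by
    have := h.tan_two_mul_nonneg (hη t ht)
    have := radialWeight_pos N (s t)
    positivity

lemma weightedSin_lt (hN : 1 ≤ N) (hab : a < b) (hη : ∀ t ∈ Ioo a b, 0 < η t)
    (hχ : ∀ t ∈ Ioo a b, |χ t| < π / 2) : weightedSin N s χ a < weightedSin N s χ b :=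
  h.rate_weightedSin.lt_of_pos h.clockSpeed_pos hab fun t ht => by
    have := h.tan_two_mul_pos (hη t ht)
    have := radialWeight_pos N (s t)
    have := cos_pos_of_mem_Ioo (abs_lt.1 (hχ t ht))
    positivity

lemma weightedCos_le (hab : a ≤ b) (hF : ∀ t ∈ Ioo a b, radialForce N (s t) ≤ 0) :
    weightedCos N η χ a ≤ weightedCos N η χ b :=
  h.rate_weightedCos.le_of_nonneg h.clockSpeed_pos hab fun t ht => by
    have := h.cos_two_mul_pos t
    have : 0 ≤ -radialForce N (s t) * cos (2 * η t) ^ N * sin (χ t) ^ 2 :=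
      mul_nonneg (mul_nonneg (neg_nonneg.2 (hF t ht)) (by positivity)) (sq_nonneg _)
    linarith

lemma weightedTurning_le (hab : a ≤ b) (hη : ∀ t ∈ Ioo a b, 0 ≤ η t)
    (hχ : ∀ t ∈ Ioo a b, χ t ∈ Icc (-(π / 2)) 0) (hF : ∀ t ∈ Ioo a b, 0 ≤ radialForce N (s t))
    (hY : ∀ t ∈ Ioo a b, 0 ≤ weightedTurning N s η χ t) :
    weightedTurning N s η χ a ≤ weightedTurning N s η χ b :=
  h.rate_weightedTurning.le_of_nonneg h.clockSpeed_pos hab fun t ht => by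
    have hFt := hF t ht
    have hYt := hY t ht
    have hcos := h.cos_two_mul_pos t
    have hsin := h.sin_two_mul_nonneg (hη t ht)
    have hcosχ : 0 ≤ cos (χ t) :=
      cos_nonneg_of_mem_Icc ⟨(hχ t ht).1, (hχ t ht).2.trans (by positivity)⟩
    have hsinχ : 0 ≤ -sin (χ t) := neg_nonneg.2 <|
      sin_nonpos_of_nonpos_of_neg_pi_le (hχ t ht).2 (by linarith [(hχ t ht).1, pi_pos])
    have hF' : 0 ≤ 2 * (2 * N + 1) - radialForce N (s t) := by
      linarith [radialForce_lt N (s t), Nat.cast_nonneg (α := ℝ) N]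
    rw [sub_eq_add_neg, ← neg_mul, ← neg_mul, ← neg_mul]
    positivity

lemma weightedTurning_pos (hη : ∀ t ∈ Ioo a b, 0 ≤ η t)
    (hχ : ∀ t ∈ Ioo a b, χ t ∈ Icc (-(π / 2)) 0) (hF : ∀ t ∈ Ioo a b, 0 ≤ radialForce N (s t))
    (hY : 0 < weightedTurning N s η χ a) : ∀ t ∈ Icc a b, 0 < weightedTurning N s η χ t :=
  pos_on_Icc_of_bootstrap h.rate_weightedTurning.continuous hY fun t ht hpos =>
    have hsub : Ioo a t ⊆ Ioo a b := Ioo_subset_Ioo_right ht.2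
    hY.trans_le <| h.weightedTurning_le ht.1.le (fun u hu => hη u (hsub hu))
      (fun u hu => hχ u (hsub hu)) (fun u hu => hF u (hsub hu))
      fun u hu => (hpos u ⟨hu.1.le, hu.2⟩).le

lemma weightedTurning_pos_of_radialForce_eq_zero {t : ℝ} (hη : 0 < η t) (hχ : |χ t| < π / 2)
    (hF : radialForce N (s t) = 0) : 0 < weightedTurning N s η χ t := by
  have := h.cos_two_mul_pos t
  have := h.sin_two_mul_pos hη
  have := cos_pos_of_mem_Ioo (abs_lt.1 hχ)
  rw [weightedTurning, hF, zero_mul, zero_mul, add_zero]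
  positivity

lemma weightedTurning_le_mul_weightedCos {t : ℝ} (hχ : χ t ∈ Icc (-(π / 2)) 0)
    (hF : 0 ≤ radialForce N (s t)) :
    weightedTurning N s η χ t ≤ (2 * N + 1) * weightedCos N η χ t := by
  have hcos := h.cos_two_mul_pos t
  have hcosχ := cos_nonneg_of_mem_Icc ⟨hχ.1, hχ.2.trans (by positivity)⟩
  have hFsin : radialForce N (s t) * cos (2 * η t) * sin (χ t) ≤ 0 :=
    mul_nonpos_of_nonneg_of_nonpos (by positivity) <|
      sin_nonpos_of_nonpos_of_neg_pi_le hχ.2 (by linarith [hχ.1, pi_pos])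
  have hsin : (2 * N + 1) * sin (2 * η t) * cos (χ t) ≤ (2 * N + 1) * 1 * cos (χ t) := by
    gcongr; exact sin_le_one _
  calc weightedTurning N s η χ t ≤ cos (2 * η t) ^ N * ((2 * N + 1) * 1 * cos (χ t)) := by
        unfold weightedTurning; gcongr; linarith
    _ = (2 * N + 1) * weightedCos N η χ t := by unfold weightedCos; ring

lemma mul_s_sub_le (hab : a ≤ b) (hχ : ∀ t ∈ Ioo a b, χ t ∈ Icc (-(π / 2)) 0) :
    2 * N * tan (2 * η a) * (s a - s b) ≤
      χ b + (2 * N + 1) * η b - (χ a + (2 * N + 1) * η a) := by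
  have hsinχ : ∀ t ∈ Ioo a b, sin (χ t) ≤ 0 := fun t ht =>
    sin_nonpos_of_nonpos_of_neg_pi_le (hχ t ht).2 (by linarith [(hχ t ht).1, pi_pos])
  have hgrow := (h.rate_s.const_mul (-(2 * N * tan (2 * η a)))).sub_le_sub
    (h.rate_χ.add (h.rate_η.const_mul (2 * N + 1))) h.clockSpeed_pos hab fun t ht => ?_
  · linarith
  have hηle : η a ≤ η t := h.le_η ht.1.le fun v hv => hsinχ v ⟨hv.1, hv.2.trans ht.2⟩
  have htan : tan (2 * η a) ≤ tan (2 * η t) := by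
    have h₁ := abs_lt.1 (h.abs_η_lt a)
    have h₂ := abs_lt.1 (h.abs_η_lt t)
    exact strictMonoOn_tan.monotoneOn ⟨by linarith, by linarith⟩ ⟨by linarith, by linarith⟩
      (by linarith)
  have hforce : 0 ≤ (radialForce N (s t) - (2 * N + 1)) * sin (χ t) :=
    mul_nonneg_of_nonpos_of_nonpos (by linarith [radialForce_lt N (s t)]) (hsinχ t ht)
  have hcosχ : 0 ≤ cos (χ t) :=
    cos_nonneg_of_mem_Icc ⟨(hχ t ht).1, (hχ t ht).2.trans (by positivity)⟩
  have : 2 * N * tan (2 * η a) * cos (χ t) ≤ 2 * N * tan (2 * η t) * cos (χ t) := by gcongr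
  linarith

lemma χ_mem_Icc_of_χ_eq (hη : ∀ t ∈ Ioo a b, 0 ≤ η t) (hχ : ∀ t ∈ Ioo a b, |χ t| < π / 2)
    (hb : χ b = -(π / 2)) : ∀ t ∈ Ioo a b, χ t ∈ Icc (-(π / 2)) 0 := by
  intro t ht
  refine ⟨(abs_lt.1 (hχ t ht)).1.le, not_lt.1 fun hpos => ?_⟩
  have hM := h.weightedSin_le ht.2.le fun v hv => hη v ⟨ht.1.trans hv.1, hv.2⟩
  have hA := radialWeight_pos N (s t)
  have hA' := radialWeight_pos N (s b)
  have hsin := sin_pos_of_pos_of_lt_pi hpos (by linarith [(abs_lt.1 (hχ t ht)).2, pi_pos])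
  simp only [weightedSin, hb, sin_neg, sin_pi_div_two] at hM
  nlinarith [mul_pos hA hsin]

end ProfileOrbit

/-- Strictly between the times `0` and `T` the orbit lies above the diagonal and has not yet turned
back towards the direction perpendicular to the rays. -/
def StaysInside (η χ : ℝ → ℝ) (T : ℝ) : Prop := ∀ t ∈ Ioo 0 T, 0 < η t ∧ χ t < π / 2

/-- An orbit leaving the diagonal perpendicularly at distance `eᵃ`, outside the round sphere. -/
structure IsShot (N : ℕ) (a : ℝ) (s η χ : ℝ → ℝ) : Prop extends ProfileOrbit N s η χ where
  s_zero : s 0 = a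
  η_zero : η 0 = 0
  χ_zero : χ 0 = -(π / 2)
  force_neg : radialForce N a < 0

namespace IsShot

variable {N : ℕ} {a : ℝ} {s η χ : ℝ → ℝ} {T : ℝ} (h : IsShot N a s η χ)
include h

lemma eventually_η_pos_χ_gt :
    ∀ᶠ t in nhdsWithin 0 (Ioi 0), 0 < η t ∧ -(π / 2) < χ t := by
  have hη := eventually_pos_right_of_deriv_pos (h.rate_η 0) h.η_zero <|
    mul_pos (h.clockSpeed_pos 0) (by simp [h.χ_zero])
  have hχ := eventually_pos_right_of_deriv_pos ((h.rate_χ 0).add_const (π / 2))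
    (by simp [h.χ_zero]) <|
    mul_pos (h.clockSpeed_pos 0) (by simpa [h.χ_zero, h.s_zero] using h.force_neg)
  filter_upwards [hη, hχ] with t ht ht'
  exact ⟨ht, by linarith⟩

lemma exists_radialForce_eq_zero {u : ℝ} (hu : 0 ≤ u) (hF : 0 ≤ radialForce N (s u)) :
    ∃ t ∈ Ioc 0 u, radialForce N (s t) = 0 := by
  obtain ⟨t, ht, hFt⟩ := intermediate_value_Icc hu
    h.rate_radialForce.continuous.continuousOn ⟨by simpa [h.s_zero] using h.force_neg.le, hF⟩
  refine ⟨t, ⟨ht.1.lt_of_ne ?_, ht.2⟩, hFt⟩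
  rintro rfl
  exact h.force_neg.ne (h.s_zero ▸ hFt)

/-- Inside the sphere the Lyapunov function `weightedTurning` prevents the return to `-(π / 2)`,
outside it is `weightedCos` that does. -/
lemma χ_ne_of_first_return {u : ℝ} (hu : 0 < u) (hη : ∀ t ∈ Ioc 0 u, 0 < η t)
    (hχ : ∀ t ∈ Ioo 0 u, |χ t| < π / 2) : χ u ≠ -(π / 2) := by
  intro hχu
  have hη' : ∀ t ∈ Ioo 0 u, 0 ≤ η t := fun t ht => (hη t ⟨ht.1, ht.2.le⟩).le
  have hneg := h.χ_mem_Icc_of_χ_eq hη' hχ hχu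
  have hsmono : ∀ t ∈ Icc 0 u, ∀ v ∈ Icc t u, radialForce N (s t) ≤ radialForce N (s v) :=
    fun t ht v hv => (strictAnti_radialForce N).antitone <| h.s_le hv.1 fun x hx =>
      (hχ x ⟨ht.1.trans_lt hx.1, hx.2.trans_le hv.2⟩).le
  rcases le_or_gt (radialForce N (s u)) 0 with hF | hF
  · have hK := h.weightedCos_le (a := u / 2) (b := u) (by linarith) fun t ht =>
      (hsmono t ⟨by linarith [ht.1], ht.2.le⟩ u ⟨ht.2.le, le_rfl⟩).trans hF
    have hcos := cos_pos_of_mem_Ioo (abs_lt.1 (hχ (u / 2) ⟨by linarith, by linarith⟩))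
    have hcos' := h.cos_two_mul_pos (u / 2)
    simp only [weightedCos, hχu, cos_neg, cos_pi_div_two, mul_zero] at hK
    exact hK.not_gt (by positivity)
  · obtain ⟨t, ht, hFt⟩ := h.exists_radialForce_eq_zero hu.le hF.le
    have htu : t < u := ht.2.lt_of_ne (by rintro rfl; exact hF.ne' hFt)
    have hsub : Ioo t u ⊆ Ioo 0 u := Ioo_subset_Ioo_left ht.1.le
    have hY := h.weightedTurning_pos_of_radialForce_eq_zero (hη t ht) (hχ t ⟨ht.1, htu⟩) hFt
    have hYu := h.weightedTurning_pos (fun v hv => hη' v (hsub hv))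
      (fun v hv => hneg v (hsub hv))
      (fun v hv => hFt ▸ hsmono t ⟨ht.1.le, ht.2⟩ v ⟨hv.1.le, hv.2.le⟩) hY u ⟨ht.2, le_rfl⟩
    have hcos := h.cos_two_mul_pos u
    simp only [weightedTurning, hχu, cos_neg, cos_pi_div_two, sin_neg, sin_pi_div_two] at hYu
    have : 0 < cos (2 * η u) ^ N * (radialForce N (s u) * cos (2 * η u)) := by positivity
    linarith

lemma abs_χ_lt (hin : StaysInside η χ T) : ∀ t ∈ Ioo 0 T, |χ t| < π / 2 := by
  intro t ht
  refine abs_lt.2 ⟨?_, (hin t ht).2⟩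
  by_contra! hχt
  obtain ⟨c, hc, hinit⟩ := mem_nhdsGT_iff_exists_Ioo_subset.1 h.eventually_η_pos_χ_gt
  obtain ⟨t₀, ht₀, ht₀'⟩ := exists_between (lt_min (mem_Ioi.1 hc) ht.1)
  obtain ⟨hc', ht'⟩ := lt_min_iff.1 ht₀'
  obtain ⟨u, hu, hχu, hfirst⟩ :=
    exists_first_mem (isClosed_le h.continuous_χ continuous_const) ht'.le hχt
  have hu0 : 0 < u := ht₀.trans_le hu.1
  have hpre : ∀ v ∈ Ioo 0 u, -(π / 2) < χ v := fun v hv => by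
    rcases lt_or_ge v t₀ with hv' | hv'
    · exact (hinit ⟨hv.1, hv'.trans hc'⟩).2
    · exact not_le.1 (hfirst v ⟨hv', hv.2⟩)
  have hge : -(π / 2) ≤ χ u := le_right_of_le_on_Ioo continuous_const h.continuous_χ hu0
    fun v hv => (hpre v hv).le
  have hsub : ∀ v, 0 < v → v ≤ u → v ∈ Ioo 0 T := fun v hv hv' =>
    ⟨hv, (hv'.trans hu.2).trans_lt ht.2⟩
  exact h.χ_ne_of_first_return hu0 (fun v hv => (hin v (hsub v hv.1 hv.2)).1)
    (fun v hv => abs_lt.2 ⟨hpre v hv, (hin v (hsub v hv.1 hv.2.le)).2⟩) (hge.antisymm' hχu)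

lemma s_le_of_staysInside (hin : StaysInside η χ T) {t u : ℝ} (ht : 0 ≤ t) (htu : t ≤ u)
    (hu : u ≤ T) : s u ≤ s t :=
  h.s_le htu fun v hv => (h.abs_χ_lt hin v ⟨ht.trans_lt hv.1, hv.2.trans_le hu⟩).le

lemma cos_χ_pos (hin : StaysInside η χ T) {t : ℝ} (ht : t ∈ Ioo 0 T) : 0 < cos (χ t) :=
  cos_pos_of_mem_Ioo (abs_lt.1 (h.abs_χ_lt hin t ht))

end IsShot

end Shots

section Arches

lemma radialWeight_le_exp (N : ℕ) {s a : ℝ} (hs : s ≤ a) :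
    radialWeight N s ≤ exp ((2 * N + 1) * a) := by
  refine exp_le_exp.2 ?_
  have := exp_pos (2 * s)
  have : (2 * N + 1) * s ≤ (2 * N + 1) * a := by gcongr
  linarith

/-- The arc of a shot along which `χ` increases from `-(π / 2)` through `0`, at time `m`, to a
positive value at time `T`, with the orbit above the diagonal. -/
structure IsArch (N : ℕ) (a m T : ℝ) (s η χ : ℝ → ℝ) : Prop extends IsShot N a s η χ where
  m_pos : 0 < m
  m_lt : m < T
  χ_m : χ m = 0
  rising : ∀ t ∈ Ioo 0 m, 0 < η t ∧ χ t ∈ Ioo (-(π / 2)) 0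
  falling : ∀ t ∈ Ioo m T, 0 < η t ∧ χ t ∈ Ico 0 (π / 2)

namespace IsShot

variable {N : ℕ} {a : ℝ} {s η χ : ℝ → ℝ} {T : ℝ} (h : IsShot N a s η χ)
include h

lemma exists_weightedCos_ge (hin : ∀ T, StaysInside η χ T) (hχ : ∀ t > 0, χ t ≤ 0) :
    ∃ k > 0, ∃ t₁ > 0, ∀ t ≥ t₁, k ≤ weightedCos N η χ t := by
  have hη : ∀ t > 0, 0 < η t := fun t ht => (hin (t + 1) t ⟨ht, by linarith⟩).1
  have habs : ∀ t > 0, |χ t| < π / 2 := fun t ht => h.abs_χ_lt (hin (t + 1)) t ⟨ht, by linarith⟩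
  have hcosχ : ∀ t > 0, 0 < cos (χ t) := fun t ht => cos_pos_of_mem_Ioo (abs_lt.1 (habs t ht))
  by_cases hF : ∀ t > 0, radialForce N (s t) ≤ 0
  · exact ⟨_, mul_pos (pow_pos (h.cos_two_mul_pos 1) N) (hcosχ 1 one_pos), 1, one_pos,
      fun t ht => h.weightedCos_le ht fun u hu => hF u (one_pos.trans hu.1)⟩
  push Not at hF
  obtain ⟨u, hu, hFu⟩ := hF
  obtain ⟨t₀, ⟨ht₀, -⟩, hF₀⟩ := h.exists_radialForce_eq_zero hu.le hFu.le
  have hF : ∀ t ≥ t₀, 0 ≤ radialForce N (s t) := fun t ht => hF₀ ▸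
    (strictAnti_radialForce N).antitone (h.s_le_of_staysInside (hin t) ht₀.le ht le_rfl)
  have hY₀ :=
    h.weightedTurning_pos_of_radialForce_eq_zero (hη t₀ ht₀) (habs t₀ ht₀) hF₀
  have hmem : ∀ t ≥ t₀, χ t ∈ Icc (-(π / 2)) 0 := fun t ht =>
    ⟨(abs_lt.1 (habs t (ht₀.trans_le ht))).1.le, hχ t (ht₀.trans_le ht)⟩
  refine ⟨weightedTurning N s η χ t₀ / (2 * N + 1), by positivity, t₀, ht₀, fun t ht => ?_⟩
  have hY : weightedTurning N s η χ t₀ ≤ weightedTurning N s η χ t :=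
    h.weightedTurning_le ht (fun u hu => (hη u (ht₀.trans hu.1)).le) (fun u hu => hmem u hu.1.le)
      (fun u hu => hF u hu.1.le) fun u hu => (h.weightedTurning_pos
        (fun v hv => (hη v (ht₀.trans hv.1)).le) (fun v hv => hmem v hv.1.le)
        (fun v hv => hF v hv.1.le) hY₀ u ⟨hu.1.le, le_rfl⟩).le
  rw [div_le_iff₀' (by positivity)]
  exact hY.trans (h.weightedTurning_le_mul_weightedCos (hmem t ht) (hF t ht))

lemma exists_s_lt (hN : 1 ≤ N) (hin : ∀ T, StaysInside η χ T) {k t₁ : ℝ} (hk : 0 < k)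
    (ht₁ : 0 < t₁) (hK : ∀ t ≥ t₁, k ≤ weightedCos N η χ t) (c : ℝ) : ∃ t ≥ t₁, s t < c := by
  refine exists_lt_of_deriv_le_neg h.rate_s
    (q := sigmoid (-2 * a) * (k * k)) (mul_pos (sigmoid_pos _) (mul_pos hk hk)) (fun t ht => ?_) c
  have hcos := h.cos_two_mul_pos t
  have hcosχ := h.cos_χ_pos (hin (t + 1)) (t := t) ⟨ht₁.trans ht, by linarith⟩
  have hpow : cos (2 * η t) ^ N ≤ cos (2 * η t) :=
    pow_le_of_le_one hcos.le (cos_le_one _) (by lia)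
  have hkt : k ≤ cos (2 * η t) ^ N * cos (χ t) := hK t ht.le
  have hkcos : k ≤ cos (2 * η t) := by nlinarith [cos_le_one (χ t)]
  have hkcosχ : k ≤ cos (χ t) := by nlinarith [cos_le_one (2 * η t)]
  have hsig : sigmoid (-2 * a) ≤ sigmoid (-2 * s t) := sigmoid_le <| by
    linarith [h.s_le_of_staysInside (hin t) le_rfl (ht₁.trans ht).le le_rfl, h.s_zero]
  rw [clockSpeed, mul_neg, neg_le_neg_iff, mul_assoc]
  have := sigmoid_pos (-2 * s t)
  gcongr

/-- Otherwise the orbit would fall into the origin, while the angle `χ + (2N + 1) η` would grow at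
least linearly in `-s`. -/
lemma exists_χ_pos (hN : 1 ≤ N) (hin : ∀ T, StaysInside η χ T) : ∃ t > 0, 0 < χ t := by
  by_contra! hχ
  obtain ⟨k, hk, t₁, ht₁, hK⟩ := h.exists_weightedCos_ge hin hχ
  have hη₁ : 0 < η t₁ := (hin (t₁ + 1) t₁ ⟨ht₁, by linarith⟩).1
  have hχmem : ∀ t > 0, χ t ∈ Icc (-(π / 2)) 0 := fun t ht =>
    ⟨(abs_lt.1 (h.abs_χ_lt (hin (t + 1)) t ⟨ht, by linarith⟩)).1.le, hχ t ht⟩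
  set q := 2 * N * tan (2 * η t₁)
  have hq : 0 < q := by
    have := h.tan_two_mul_pos hη₁
    positivity
  obtain ⟨t, ht, hst⟩ :=
    h.exists_s_lt hN hin hk ht₁ hK (s t₁ - ((2 * N + 1) * (π / 4) + π / 2) / q)
  have hgrow : q * (s t₁ - s t) ≤ χ t + (2 * N + 1) * η t - (χ t₁ + (2 * N + 1) * η t₁) :=
    h.mul_s_sub_le ht fun u hu => hχmem u (ht₁.trans hu.1)
  have hηt : (2 * N + 1) * η t ≤ (2 * N + 1) * (π / 4) := by
    gcongr; exact (abs_lt.1 (h.abs_η_lt t)).2.le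
  have : 0 < (2 * N + 1) * η t₁ := by positivity
  have hdrop : (2 * N + 1) * (π / 4) + π / 2 < q * (s t₁ - s t) := by
    rw [← div_lt_iff₀' hq]; linarith
  linarith [(hχmem t₁ ht₁).1, hχ t (ht₁.trans_le ht)]

/-- Once `χ` is positive, monotonicity of `weightedSin` makes `η` decrease at least linearly. -/
lemma exists_not_staysInside (hN : 1 ≤ N) : ∃ T, ¬ StaysInside η χ T := by
  by_contra! hin
  obtain ⟨t₁, ht₁, hχ₁⟩ := h.exists_χ_pos hN hin
  have hη : ∀ t > 0, 0 < η t := fun t ht => (hin (t + 1) t ⟨ht, by linarith⟩).1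
  have hm : 0 < weightedSin N s χ t₁ := mul_pos (radialWeight_pos _ _) <|
    sin_pos_of_pos_of_lt_pi hχ₁ (by linarith [(hin (t₁ + 1) t₁ ⟨ht₁, by linarith⟩).2, pi_pos])
  have hs : ∀ t ≥ t₁, s t ≤ a := fun t ht => h.s_zero ▸
    h.s_le_of_staysInside (hin t) le_rfl (ht₁.le.trans ht) le_rfl
  have hsinχ : ∀ t ≥ t₁, weightedSin N s χ t₁ / exp ((2 * N + 1) * a) ≤ sin (χ t) := by
    intro t ht
    have hM := h.weightedSin_le ht fun u hu => (hη u (ht₁.trans hu.1)).le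
    have hpos : 0 < sin (χ t) :=
      pos_of_mul_pos_right (hm.trans_le hM) (radialWeight_pos _ _).le
    rw [div_le_iff₀' (exp_pos _)]
    exact hM.trans <| by unfold weightedSin; gcongr; exact radialWeight_le_exp N (hs t ht)
  set m := weightedSin N s χ t₁ / exp ((2 * N + 1) * a)
  have hm' : 0 < m := by positivity
  have hcos₁ := h.cos_two_mul_pos t₁
  suffices hdecay : ∀ t > t₁,
      clockSpeed s η t * -sin (χ t) ≤ -(sigmoid (-2 * a) * cos (2 * η t₁) * m) by
    obtain ⟨t, ht, hηt⟩ := exists_lt_of_deriv_le_neg h.rate_η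
      (mul_pos (mul_pos (sigmoid_pos _) hcos₁) hm') hdecay 0
    exact hηt.not_gt (hη t (ht₁.trans_le ht))
  intro t ht
  have hηle : η t ≤ η t₁ := h.η_le ht.le fun u hu => hm'.le.trans (hsinχ u hu.1.le)
  have hcos : cos (2 * η t₁) ≤ cos (2 * η t) := by
    have := (abs_lt.1 (h.abs_η_lt t₁)).2
    have := hη t (ht₁.trans ht)
    exact cos_le_cos_of_nonneg_of_le_pi (by linarith) (by linarith) (by linarith)
  have hsig : sigmoid (-2 * a) ≤ sigmoid (-2 * s t) :=
    sigmoid_le (by linarith [hs t ht.le])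
  have := sigmoid_pos (-2 * s t)
  rw [clockSpeed, mul_neg, neg_le_neg_iff]
  exact mul_le_mul (by gcongr) (hsinχ t ht.le) hm'.le
    (h.clockSpeed_pos t).le

lemma exists_staysInside : ∃ c > 0, StaysInside η χ c := by
  have hχ₀ : ∀ᶠ t in nhdsWithin 0 (Ioi 0), χ t < π / 2 := nhdsWithin_le_nhds <|
    h.continuous_χ.continuousAt.eventually_lt_const (by rw [h.χ_zero]; linarith [pi_pos])
  obtain ⟨c, hc, hinit⟩ :=
    mem_nhdsGT_iff_exists_Ioo_subset.1 (h.eventually_η_pos_χ_gt.and hχ₀)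
  exact ⟨c, hc, fun t ht => ⟨(hinit ht).1.1, (hinit ht).2⟩⟩

lemma exists_exit (hN : 1 ≤ N) :
    ∃ T > 0, StaysInside η χ T ∧ χ T ≤ π / 2 ∧ (η T = 0 ∨ χ T = π / 2) := by
  obtain ⟨T', hT'⟩ := h.exists_not_staysInside hN
  simp only [StaysInside, not_forall] at hT'
  obtain ⟨b, ⟨hb, -⟩, hout⟩ := hT'
  obtain ⟨c, hc, hinit⟩ := h.exists_staysInside
  obtain ⟨t₀, ht₀, ht₀c⟩ := exists_between hc
  have ht₀b : t₀ ≤ b := not_lt.1 fun hlt => hout (hinit b ⟨hb, hlt.trans ht₀c⟩)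
  have hclosed : IsClosed {t | η t ≤ 0 ∨ π / 2 ≤ χ t} :=
    (isClosed_le h.continuous_η continuous_const).union
      (isClosed_le continuous_const h.continuous_χ)
  have houtside : ∀ t, t ∉ {t | η t ≤ 0 ∨ π / 2 ≤ χ t} → 0 < η t ∧ χ t < π / 2 := fun t ht =>
    (not_or.1 ht).imp not_le.1 not_le.1
  obtain ⟨T, hT, hexit, hfirst⟩ :=
    exists_first_mem hclosed ht₀b (by_contra fun hnot => hout (houtside b hnot))
  have hin : StaysInside η χ T := fun t ht => by
    rcases lt_or_ge t t₀ with hlt | hge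
    · exact hinit t ⟨ht.1, hlt.trans ht₀c⟩
    · exact houtside t (hfirst t ⟨hge, ht.2⟩)
  have hT0 : 0 < T := ht₀.trans_le hT.1
  have hηT : 0 ≤ η T :=
    le_right_of_le_on_Ioo continuous_const h.continuous_η hT0 fun t ht => (hin t ht).1.le
  have hχT : χ T ≤ π / 2 :=
    le_right_of_le_on_Ioo h.continuous_χ continuous_const hT0 fun t ht => (hin t ht).2.le
  exact ⟨T, hT0, hin, hχT, hexit.imp (fun h => h.antisymm hηT) fun h => hχT.antisymm h⟩

lemma radialForce_pos_of_χ_eq (hT : 0 < T) (hin : StaysInside η χ T) (hχT : χ T = π / 2) :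
    0 < radialForce N (s T) := by
  by_contra! hF
  have hK := h.weightedCos_le (a := T / 2) (b := T) (by linarith) fun t ht =>
    ((strictAnti_radialForce N).antitone <|
      h.s_le_of_staysInside hin (by linarith [ht.1]) ht.2.le le_rfl).trans hF
  have hcosχ := h.cos_χ_pos hin (t := T / 2) ⟨by linarith, by linarith⟩
  have hcos := h.cos_two_mul_pos (T / 2)
  simp only [weightedCos, hχT, cos_pi_div_two, mul_zero] at hK
  exact hK.not_gt (by positivity)

lemma sin_χ_pos_of_η_eq_zero (hT : 0 < T) (hin : StaysInside η χ T) (hηT : η T = 0) :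
    0 < sin (χ T) := by
  have hup : ∃ u ∈ Ioo 0 T, 0 < sin (χ u) := by
    by_contra! hle
    have := h.le_η (a := T / 2) (b := T) (by linarith) fun t ht => hle t ⟨by linarith [ht.1], ht.2⟩
    linarith [(hin (T / 2) ⟨by linarith, by linarith⟩).1]
  obtain ⟨u, hu, hsin⟩ := hup
  have hM := h.weightedSin_le hu.2.le fun t ht => (hin t ⟨hu.1.trans ht.1, ht.2⟩).1.le
  exact pos_of_mul_pos_right ((mul_pos (radialWeight_pos _ _) hsin).trans_le hM)
    (radialWeight_pos _ _).le

lemma isArch_of_sin_χ_pos (hN : 1 ≤ N) (hT : 0 < T) (hin : StaysInside η χ T)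
    (hsin : 0 < sin (χ T)) (hχT : χ T ≤ π / 2) : ∃ m, IsArch N a m T s η χ := by
  have habs := h.abs_χ_lt hin
  have hχT0 : 0 < χ T := by
    by_contra! hle
    have hge : -(π / 2) ≤ χ T := le_right_of_le_on_Ioo continuous_const h.continuous_χ hT
      fun t ht => (abs_lt.1 (habs t ht)).1.le
    exact hsin.not_ge (sin_nonpos_of_nonpos_of_neg_pi_le hle (by linarith [pi_pos]))
  obtain ⟨m, hm, hχm⟩ := intermediate_value_Icc hT.le h.continuous_χ.continuousOn
    (⟨by rw [h.χ_zero]; linarith [pi_pos], hχT0.le⟩ : (0 : ℝ) ∈ Icc (χ 0) (χ T))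
  have hm0 : 0 < m := hm.1.lt_of_ne (by rintro rfl; linarith [h.χ_zero, pi_pos])
  have hmT : m < T := hm.2.lt_of_ne (by rintro rfl; exact hχT0.ne' hχm)
  have hMm : weightedSin N s χ m = 0 := by simp [weightedSin, hχm]
  have hsign : ∀ t ∈ Ioo 0 T, 0 < weightedSin N s χ t → 0 < χ t := fun t ht hM => by
    by_contra! hle
    have : sin (χ t) ≤ 0 := sin_nonpos_of_nonpos_of_neg_pi_le hle
      (by linarith [(abs_lt.1 (habs t ht)).1, pi_pos])
    exact hM.not_ge (mul_nonpos_of_nonneg_of_nonpos (radialWeight_pos _ _).le this)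
  refine ⟨m, h, hm0, hmT, hχm, fun t ht => ?_, fun t ht => ?_⟩
  · have htT : t ∈ Ioo 0 T := ⟨ht.1, ht.2.trans hmT⟩
    have hM := h.weightedSin_lt hN ht.2 (fun u hu => (hin u ⟨ht.1.trans hu.1, hu.2.trans hmT⟩).1)
      fun u hu => habs u ⟨ht.1.trans hu.1, hu.2.trans hmT⟩
    refine ⟨(hin t htT).1, (abs_lt.1 (habs t htT)).1, not_le.1 fun hle => ?_⟩
    exact (hM.trans_eq hMm).not_ge <| mul_nonneg (radialWeight_pos _ _).le <|
      sin_nonneg_of_nonneg_of_le_pi hle (by linarith [(hin t htT).2, pi_pos])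
  · have htT : t ∈ Ioo 0 T := ⟨hm0.trans ht.1, ht.2⟩
    have hM := h.weightedSin_lt hN ht.1 (fun u hu => (hin u ⟨hm0.trans hu.1, hu.2.trans ht.2⟩).1)
      fun u hu => habs u ⟨hm0.trans hu.1, hu.2.trans ht.2⟩
    exact ⟨(hin t htT).1, (hsign t htT (hMm ▸ hM)).le, (hin t htT).2⟩

lemma exists_isArch (hN : 1 ≤ N) :
    ∃ m T, IsArch N a m T s η χ ∧ (η T = 0 ∨ χ T = π / 2) := by
  obtain ⟨T, hT, hin, hχT, hexit⟩ := h.exists_exit hN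
  have hsin : 0 < sin (χ T) := hexit.elim (h.sin_χ_pos_of_η_eq_zero hT hin) fun hχ => by simp [hχ]
  obtain ⟨m, hm⟩ := h.isArch_of_sin_χ_pos hN hT hin hsin hχT
  exact ⟨m, T, hm, hexit⟩

end IsShot

namespace IsArch

variable {N : ℕ} {a m T : ℝ} {s η χ : ℝ → ℝ} (h : IsArch N a m T s η χ) {t u : ℝ}
include h

lemma T_pos : 0 < T := h.m_pos.trans h.m_lt

lemma χ_mem_Icc_of_le (ht : t ∈ Icc 0 m) : χ t ∈ Icc (-(π / 2)) 0 := by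
  rcases ht.1.eq_or_lt with rfl | h0
  · exact ⟨h.χ_zero.ge, by linarith [h.χ_zero, pi_pos]⟩
  rcases ht.2.eq_or_lt with rfl | hm
  · exact ⟨by linarith [h.χ_m, pi_pos], h.χ_m.le⟩
  · exact Ioo_subset_Icc_self (h.rising t ⟨h0, hm⟩).2

lemma χ_T_le : χ T ≤ π / 2 := le_right_of_le_on_Ioo h.continuous_χ continuous_const h.m_lt
  fun t ht => (h.falling t ht).2.2.le

lemma χ_mem_Icc_of_ge (ht : t ∈ Icc m T) : χ t ∈ Icc 0 (π / 2) := by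
  rcases ht.1.eq_or_lt with rfl | hm
  · exact ⟨h.χ_m.ge, by linarith [h.χ_m, pi_pos]⟩
  rcases ht.2.eq_or_lt with rfl | hT
  · exact ⟨le_right_of_le_on_Ioo continuous_const h.continuous_χ h.m_lt
      fun t ht => (h.falling t ht).2.1, h.χ_T_le⟩
  · exact Ico_subset_Icc_self (h.falling t ⟨hm, hT⟩).2

lemma sin_χ_nonpos (ht : t ∈ Icc 0 m) : sin (χ t) ≤ 0 := by
  have := h.χ_mem_Icc_of_le ht
  exact sin_nonpos_of_nonpos_of_neg_pi_le this.2 (by linarith [this.1, pi_pos])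

lemma sin_χ_nonneg (ht : t ∈ Icc m T) : 0 ≤ sin (χ t) := by
  have := h.χ_mem_Icc_of_ge ht
  exact sin_nonneg_of_nonneg_of_le_pi this.1 (by linarith [this.2, pi_pos])

lemma η_mono (ht : 0 ≤ t) (htu : t ≤ u) (hu : u ≤ m) : η t ≤ η u :=
  h.le_η htu fun _ hv => h.sin_χ_nonpos ⟨ht.trans hv.1.le, hv.2.le.trans hu⟩

lemma η_anti (ht : m ≤ t) (htu : t ≤ u) (hu : u ≤ T) : η u ≤ η t :=
  h.η_le htu fun _ hv => h.sin_χ_nonneg ⟨ht.trans hv.1.le, hv.2.le.trans hu⟩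

lemma η_pos (ht : t ∈ Ioo 0 T) : 0 < η t := by
  rcases lt_trichotomy t m with htm | rfl | hmt
  · exact (h.rising t ⟨ht.1, htm⟩).1
  · exact (h.rising (t / 2) ⟨by linarith [ht.1], by linarith [ht.1]⟩).1.trans_le
      (h.η_mono (by linarith [ht.1]) (by linarith [ht.1]) le_rfl)
  · exact (h.falling t ⟨hmt, ht.2⟩).1

lemma η_T_nonneg : 0 ≤ η T :=
  le_right_of_le_on_Ioo continuous_const h.continuous_η h.T_pos fun _ ht => (h.η_pos ht).le

lemma η_m_pos : 0 < η m := h.η_pos ⟨h.m_pos, h.m_lt⟩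

lemma η_le_η_m (ht : t ∈ Icc 0 T) : η t ≤ η m :=
  (le_total t m).elim (fun htm => h.η_mono ht.1 htm le_rfl)
    fun hmt => h.η_anti le_rfl hmt ht.2

lemma χ_lt (ht : t ∈ Ioo 0 T) : χ t < π / 2 := by
  rcases le_or_gt t m with htm | hmt
  · linarith [(h.χ_mem_Icc_of_le ⟨ht.1.le, htm⟩).2, pi_pos]
  · exact (h.falling t ⟨hmt, ht.2⟩).2.2

lemma staysInside : StaysInside η χ T := fun _ ht => ⟨h.η_pos ht, h.χ_lt ht⟩

lemma cos_χ_pos (ht : t ∈ Ioo 0 T) : 0 < cos (χ t) := h.toIsShot.cos_χ_pos h.staysInside ht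

lemma s_anti (ht : 0 ≤ t) (htu : t ≤ u) (hu : u ≤ T) : s u ≤ s t :=
  h.s_le_of_staysInside h.staysInside ht htu hu

lemma radialForce_mono (ht : 0 ≤ t) (htu : t ≤ u) (hu : u ≤ T) :
    radialForce N (s t) ≤ radialForce N (s u) :=
  (strictAnti_radialForce N).antitone (h.s_anti ht htu hu)

lemma cos_χ_nonneg (ht : t ∈ Icc 0 T) : 0 ≤ cos (χ t) := by
  rcases le_total t m with htm | hmt
  · have := h.χ_mem_Icc_of_le ⟨ht.1, htm⟩
    exact cos_nonneg_of_mem_Icc ⟨this.1, by linarith [this.2, pi_pos]⟩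
  · have := h.χ_mem_Icc_of_ge ⟨hmt, ht.2⟩
    exact cos_nonneg_of_mem_Icc ⟨by linarith [this.1, pi_pos], this.2⟩

lemma η_nonneg (ht : t ∈ Icc 0 T) : 0 ≤ η t := by
  rcases ht.1.eq_or_lt with rfl | h0
  · exact h.η_zero.ge
  rcases ht.2.eq_or_lt with rfl | hT
  exacts [h.η_T_nonneg, (h.η_pos ⟨h0, hT⟩).le]

lemma radialForce_ge (ht : t ∈ Icc 0 T) : radialForce N a ≤ radialForce N (s t) :=
  h.s_zero ▸ h.radialForce_mono le_rfl ht.1 ht.2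

end IsArch

end Arches

section NearSphere

/-- The amount by which `weightedCos` changes per unit of `radialForce` while `η` moves between `0`
and `π / 8` on an orbit crossing the sphere steeply. -/
noncomputable def sweepGain (N : ℕ) : ℝ := cos (π / 4) ^ N * (π / 16)

lemma sweepGain_pos (N : ℕ) : 0 < sweepGain N := by
  have : 0 < cos (π / 4) := by rw [cos_pi_div_four]; positivity
  unfold sweepGain; positivity

lemma mul_abs_sin_le {N : ℕ} {η χ : ℝ → ℝ} {t : ℝ} (hη : 0 ≤ η t) (hη' : η t ≤ π / 8)
    (hχ : 0 ≤ cos (χ t)) (hK : weightedCos N η χ t ≤ cos (π / 4) ^ N / 2) :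
    cos (π / 4) ^ N / 2 * |sin (χ t)| ≤ cos (2 * η t) ^ N * sin (χ t) ^ 2 := by
  have hβ : 0 < cos (π / 4) := by rw [cos_pi_div_four]; positivity
  have hpow : cos (π / 4) ^ N ≤ cos (2 * η t) ^ N := by
    gcongr
    exact cos_le_cos_of_nonneg_of_le_pi (by linarith) (by linarith [pi_pos]) (by linarith)
  have hβN : 0 < cos (π / 4) ^ N := pow_pos hβ N
  have hcosχ : cos (χ t) ≤ 1 / 2 := by
    unfold weightedCos at hK
    nlinarith
  have hsin : 1 / 2 ≤ |sin (χ t)| := by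
    refine abs_le_of_sq_le_sq' ?_ (abs_nonneg _) |>.2
    rw [sq_abs]
    nlinarith [sin_sq_add_cos_sq (χ t)]
  rw [← sq_abs (sin (χ t))]
  calc cos (π / 4) ^ N / 2 * |sin (χ t)| = cos (π / 4) ^ N * (1 / 2 * |sin (χ t)|) := by ring
    _ ≤ cos (2 * η t) ^ N * |sin (χ t)| ^ 2 := by rw [sq]; gcongr; exact hβN.le.trans hpow

namespace ProfileOrbit

variable {N : ℕ} {s η χ : ℝ → ℝ} (h : ProfileOrbit N s η χ) {t : ℝ}
include h

lemma weightedCos_mul_tan_le (hN : 1 ≤ N) (hη : 0 ≤ η t) (hcos : 0 ≤ cos (χ t)) :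
    weightedCos N η χ t * -(tan (2 * η t) * sin (χ t)) ≤ cos (χ t) := by
  have hC := h.cos_two_mul_pos t
  have hCT : cos (2 * η t) ^ N * tan (2 * η t) ≤ 1 :=
    calc cos (2 * η t) ^ N * tan (2 * η t) ≤ cos (2 * η t) * tan (2 * η t) := by
          have := h.tan_two_mul_nonneg hη
          gcongr
          exact pow_le_of_le_one hC.le (cos_le_one _) (by lia)
      _ = sin (2 * η t) := by rw [mul_comm, tan_mul_cos hC.ne']
      _ ≤ 1 := sin_le_one _
  have hCT0 : 0 ≤ cos (2 * η t) ^ N * tan (2 * η t) :=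
    mul_nonneg (by positivity) (h.tan_two_mul_nonneg hη)
  calc weightedCos N η χ t * -(tan (2 * η t) * sin (χ t))
      = cos (2 * η t) ^ N * tan (2 * η t) * -sin (χ t) * cos (χ t) := by unfold weightedCos; ring
    _ ≤ 1 * cos (χ t) := by
      gcongr
      nlinarith [neg_one_le_sin (χ t)]
    _ = cos (χ t) := one_mul _

lemma weightedCos_ge {a b : ℝ} (hab : a ≤ b) (hF : ∀ t ∈ Ioo a b, 0 ≤ radialForce N (s t)) :
    weightedCos N η χ b ≤ weightedCos N η χ a :=
  h.rate_weightedCos.le_of_nonpos h.clockSpeed_pos hab fun t ht => by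
    have := h.cos_two_mul_pos t
    have := hF t ht
    exact neg_nonpos.2 (by positivity)

lemma mul_logSec_sub_le (hN : 1 ≤ N) {a b d k : ℝ} (hab : a ≤ b) (hd : 0 ≤ d) (hk : 0 ≤ k)
    (hη : ∀ t ∈ Ioo a b, 0 ≤ η t) (hcos : ∀ t ∈ Ioo a b, 0 ≤ cos (χ t))
    (hsin : ∀ t ∈ Ioo a b, sin (χ t) ≤ 0)
    (hF : ∀ t ∈ Ioo a b, d ≤ 2 * N + 1 - radialForce N (s t))
    (hK : ∀ t ∈ Ioo a b, k ≤ weightedCos N η χ t) :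
    2 * d * k * (logSec η b - logSec η a) ≤ radialForce N (s b) - radialForce N (s a) := by
  rw [mul_sub]
  refine (h.rate_logSec.const_mul (2 * d * k)).sub_le_sub h.rate_radialForce h.clockSpeed_pos hab
    fun t ht => ?_
  have hJ : 0 ≤ -(tan (2 * η t) * sin (χ t)) := neg_nonneg.2 <|
    mul_nonpos_of_nonneg_of_nonpos (h.tan_two_mul_nonneg (hη t ht)) (hsin t ht)
  have hkcos : k * -(tan (2 * η t) * sin (χ t)) ≤ cos (χ t) :=
    (mul_le_mul_of_nonneg_right (hK t ht) hJ).trans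
      (h.weightedCos_mul_tan_le hN (hη t ht) (hcos t ht))
  calc 2 * d * k * -(tan (2 * η t) * sin (χ t)) = 2 * d * (k * -(tan (2 * η t) * sin (χ t))) := by
        ring
    _ ≤ 2 * (2 * N + 1 - radialForce N (s t)) * cos (χ t) := by
      have := hF t ht
      have := hcos t ht
      gcongr
      linarith

end ProfileOrbit

namespace IsArch

variable {N : ℕ} {a m T : ℝ} {s η χ : ℝ → ℝ} (h : IsArch N a m T s η χ) {t u : ℝ}
include h

lemma weightedCos_m : weightedCos N η χ m = cos (2 * η m) ^ N := by
  simp [weightedCos, h.χ_m]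

lemma weightedCos_le_neg_radialForce (ht : t ∈ Icc 0 m) :
    weightedCos N η χ t ≤ -radialForce N a := by
  have hgrow : weightedCos N η χ t - weightedCos N η χ 0 ≤
      -radialForce N a * η t - -radialForce N a * η 0 := by
    refine h.rate_weightedCos.sub_le_sub (h.rate_η.const_mul _) h.clockSpeed_pos ht.1
      fun u hu => ?_
    have hF := h.radialForce_ge (t := u) ⟨hu.1.le, (hu.2.trans_le ht.2).le.trans h.m_lt.le⟩
    have hsin : 0 ≤ -sin (χ u) := neg_nonneg.2 (h.sin_χ_nonpos ⟨hu.1.le, hu.2.le.trans ht.2⟩)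
    have hC := (h.cos_two_mul_pos u).le
    calc -(radialForce N (s u) * cos (2 * η u) ^ N * sin (χ u) ^ 2)
        = -radialForce N (s u) * (cos (2 * η u) ^ N * (-sin (χ u) * -sin (χ u))) := by ring
      _ ≤ -radialForce N a * (1 * (1 * -sin (χ u))) := by
        have := h.force_neg
        gcongr
        exacts [by linarith, pow_le_one₀ hC (cos_le_one _), by linarith [neg_one_le_sin (χ u)]]
      _ = _ := by ring
  have hK₀ : weightedCos N η χ 0 = 0 := by simp [weightedCos, h.χ_zero]
  have hη : η t ≤ 1 := by linarith [(abs_lt.1 (h.abs_η_lt t)).2, pi_lt_four]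
  rw [hK₀, h.η_zero] at hgrow
  nlinarith [h.force_neg]

lemma sweepGain_mul_le_weightedCos (hβ : -radialForce N a ≤ cos (π / 4) ^ N / 2)
    (ht : t ∈ Icc 0 m) (hηt : η t = π / 8) (hFt : radialForce N (s t) ≤ 0) :
    sweepGain N * -radialForce N (s t) ≤ weightedCos N η χ t := by
  have hgrow := (h.rate_η.const_mul (cos (π / 4) ^ N / 2 * -radialForce N (s t))).sub_le_sub
    h.rate_weightedCos h.clockSpeed_pos ht.1 fun v hv => ?_
  · have hK₀ : weightedCos N η χ 0 = 0 := by simp [weightedCos, h.χ_zero]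
    rw [hηt, h.η_zero, hK₀] at hgrow
    unfold sweepGain
    linarith
  have hvm : v ∈ Icc 0 m := ⟨hv.1.le, hv.2.le.trans ht.2⟩
  have hvT : v ∈ Icc 0 T := ⟨hvm.1, hvm.2.trans h.m_lt.le⟩
  have hFv := h.radialForce_mono hv.1.le hv.2.le (ht.2.trans h.m_lt.le)
  have hsin := mul_abs_sin_le (h.η_nonneg hvT) (hηt ▸ h.η_mono hv.1.le hv.2.le ht.2)
    (h.cos_χ_nonneg hvT) ((h.weightedCos_le_neg_radialForce hvm).trans hβ)
  rw [abs_of_nonpos (h.sin_χ_nonpos hvm)] at hsin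
  have hsin0 : 0 ≤ cos (2 * η v) ^ N * sin (χ v) ^ 2 := by
    have := h.cos_two_mul_pos v
    positivity
  nlinarith

/-- If the orbit were still outside the round sphere at time `u`, then `weightedCos` would have
grown enough to carry it inside by that time. -/
lemma radialForce_nonneg_of_logSec (hN : 1 ≤ N)
    (hβ : -radialForce N a ≤ cos (π / 4) ^ N / 2) (ht : 0 ≤ t) (htu : t ≤ u) (hu : u ≤ m)
    (hηt : η t = π / 8)
    (hJ : 1 ≤ (2 * N + 1) * sweepGain N * (logSec η u - logSec η t)) :
    0 ≤ radialForce N (s u) := by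
  by_contra! hFu
  have hvm : ∀ v, t ≤ v → v ≤ u → v ∈ Icc 0 m := fun v hv hv' => ⟨ht.trans hv, hv'.trans hu⟩
  have hvT : ∀ v, t ≤ v → v ≤ u → v ∈ Icc 0 T := fun v hv hv' =>
    Icc_subset_Icc_right h.m_lt.le (hvm v hv hv')
  have hF : ∀ v, t ≤ v → v ≤ u → radialForce N (s v) < 0 := fun v hv hv' =>
    (h.radialForce_mono (ht.trans hv) hv' (hu.trans h.m_lt.le)).trans_lt hFu
  have hFt : 0 < -radialForce N (s t) := neg_pos.2 (hF t le_rfl htu)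
  have hK := h.sweepGain_mul_le_weightedCos hβ (hvm t le_rfl htu) hηt (hF t le_rfl htu).le
  have hgain := h.mul_logSec_sub_le hN (d := 2 * N + 1) (k := weightedCos N η χ t) htu
    (by positivity) ((mul_pos (sweepGain_pos N) hFt).le.trans hK)
    (fun v hv => h.η_nonneg (hvT v hv.1.le hv.2.le))
    (fun v hv => h.cos_χ_nonneg (hvT v hv.1.le hv.2.le))
    (fun v hv => h.sin_χ_nonpos (hvm v hv.1.le hv.2.le))
    (fun v hv => by linarith [hF v hv.1.le hv.2.le])
    (fun v hv => h.weightedCos_le hv.1.le fun x hx => (hF x hx.1.le (hx.2.trans hv.2).le).le)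
  have hΔ : 0 < logSec η u - logSec η t :=
    pos_of_mul_pos_right (one_pos.trans_le hJ) (by have := sweepGain_pos N; positivity)
  have hchain : -radialForce N (s t) ≤ 2 * (2 * N + 1) * weightedCos N η χ t *
      (logSec η u - logSec η t) :=
    calc -radialForce N (s t)
        ≤ 2 * ((2 * N + 1) * sweepGain N * (logSec η u - logSec η t)) * -radialForce N (s t) := by
          nlinarith
      _ = 2 * (2 * N + 1) * (sweepGain N * -radialForce N (s t)) * (logSec η u - logSec η t) := by
          ring
      _ ≤ _ := by gcongr
  linarith

lemma sweepGain_mul_lt_weightedCos (hβ : -radialForce N a ≤ cos (π / 4) ^ N / 2)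
    (hηm : π / 8 ≤ η m) (hFm : 0 ≤ radialForce N (s m)) (hηT : η T = 0) (hχT : χ T < π / 2) :
    sweepGain N * radialForce N (s m) < weightedCos N η χ m := by
  obtain ⟨t, ht, hηt⟩ := intermediate_value_Icc' h.m_lt.le h.continuous_η.continuousOn
    (show π / 8 ∈ Icc (η T) (η m) from ⟨by rw [hηT]; positivity, hηm⟩)
  have hF : ∀ v, m ≤ v → v ≤ T → radialForce N (s m) ≤ radialForce N (s v) :=
    fun v hv hv' => h.radialForce_mono h.m_pos.le hv hv'
  have hK : ∀ v ∈ Icc m T, weightedCos N η χ v ≤ weightedCos N η χ m := fun v hv =>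
    h.weightedCos_ge hv.1 fun w hw => hFm.trans (hF w hw.1.le (hw.2.le.trans hv.2))
  have hdrop := h.rate_weightedCos.sub_le_sub
    (h.rate_η.const_mul (cos (π / 4) ^ N / 2 * radialForce N (s m))) h.clockSpeed_pos ht.2
    fun v hv => ?_
  · have hKT : 0 < weightedCos N η χ T := by
      have hχ := h.χ_mem_Icc_of_ge ⟨h.m_lt.le, le_rfl⟩
      exact mul_pos (pow_pos (h.cos_two_mul_pos T) N)
        (cos_pos_of_mem_Ioo ⟨by linarith [hχ.1, pi_pos], hχT⟩)
    rw [hηT, hηt] at hdrop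
    have := hK t ht
    unfold sweepGain
    linarith
  have hmv : m ≤ v := ht.1.trans hv.1.le
  have hv0 : v ∈ Icc 0 T := ⟨h.m_pos.le.trans hmv, hv.2.le⟩
  have hsin := mul_abs_sin_le (h.η_nonneg hv0) (hηt ▸ h.η_anti ht.1 hv.1.le hv.2.le)
    (h.cos_χ_nonneg hv0) ((hK v ⟨hmv, hv.2.le⟩).trans
      ((h.weightedCos_le_neg_radialForce ⟨h.m_pos.le, le_rfl⟩).trans hβ))
  rw [abs_of_nonneg (h.sin_χ_nonneg ⟨hmv, hv.2.le⟩)] at hsin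
  have hsin0 : 0 ≤ cos (2 * η v) ^ N * sin (χ v) ^ 2 := by
    have := h.cos_two_mul_pos v
    positivity
  nlinarith [hF v hmv hv.2.le]

lemma le_logSec_m {L : ℝ} (hN : 1 ≤ N) (hL : -radialForce N a ≤ exp (-2 * L) ^ N) :
    L ≤ logSec η m := by
  have hK := h.weightedCos_m ▸ h.weightedCos_le_neg_radialForce (t := m) ⟨h.m_pos.le, le_rfl⟩
  have hC : cos (2 * η m) ≤ exp (-2 * L) :=
    le_of_pow_le_pow_left₀ (by lia) (exp_pos _).le (hK.trans hL)
  have := (log_le_iff_le_exp (h.cos_two_mul_pos m)).2 hC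
  unfold logSec
  linarith

lemma pi_div_eight_lt_η (ht : t ∈ Icc 0 T) (hJ : -log (cos (π / 4)) / 2 < logSec η t) :
    π / 8 < η t := by
  by_contra! hle
  have hcos : cos (π / 4) ≤ cos (2 * η t) :=
    cos_le_cos_of_nonneg_of_le_pi (by linarith [h.η_nonneg ht]) (by linarith [pi_pos]) (by linarith)
  have := log_le_log (by rw [cos_pi_div_four]; positivity) hcos
  unfold logSec at hJ
  linarith

lemma exists_radialForce_nonneg {L j : ℝ} (hN : 1 ≤ N)
    (hj : (2 * N + 1) * sweepGain N * j = 1) (hL : L = -log (cos (π / 4)) / 2 + 2 * j)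
    (hβ : -radialForce N a ≤ cos (π / 4) ^ N / 2) (hexp : -radialForce N a ≤ exp (-2 * L) ^ N) :
    π / 8 < η m ∧ ∃ t ∈ Icc 0 m, 0 ≤ radialForce N (s t) ∧ j ≤ logSec η m - logSec η t := by
  have hj0 : 0 < j := by
    have := sweepGain_pos N
    exact pos_of_mul_pos_right (hj ▸ one_pos) (by positivity)
  have hJm := h.le_logSec_m hN hexp
  have hηm : π / 8 < η m := h.pi_div_eight_lt_η ⟨h.m_pos.le, h.m_lt.le⟩ (by linarith)
  obtain ⟨t₁, ht₁, hηt₁⟩ := intermediate_value_Icc h.m_pos.le h.continuous_η.continuousOn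
    (show π / 8 ∈ Icc (η 0) (η m) from ⟨by rw [h.η_zero]; positivity, hηm.le⟩)
  have hJt₁ : logSec η t₁ = -log (cos (π / 4)) / 2 := by
    rw [logSec, hηt₁]; congr 4; ring
  obtain ⟨t₂, ht₂, hJt₂⟩ := intermediate_value_Icc ht₁.2 h.rate_logSec.continuous.continuousOn
    (show logSec η t₁ + j ∈ Icc (logSec η t₁) (logSec η m) from ⟨by linarith, by linarith⟩)
  refine ⟨hηm, t₂, ⟨ht₁.1.trans ht₂.1, ht₂.2⟩, ?_, by linarith⟩
  exact h.radialForce_nonneg_of_logSec hN hβ ht₁.1 ht₂.1 ht₂.2 hηt₁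
    (by rw [hJt₂, add_sub_cancel_left, hj])

lemma weightedCos_le_sweepGain_mul {j : ℝ} (hN : 1 ≤ N) (hj : (2 * N + 1) * sweepGain N * j = 1)
    (ht : t ∈ Icc 0 m) (hFt : 0 ≤ radialForce N (s t)) (hJ : j ≤ logSec η m - logSec η t)
    (hFm : radialForce N (s m) ≤ (2 * N + 1) / 2) :
    weightedCos N η χ m ≤ sweepGain N * radialForce N (s m) := by
  have hc := sweepGain_pos N
  have hF : ∀ v, t ≤ v → v ≤ m → 0 ≤ radialForce N (s v) := fun v hv hv' =>
    hFt.trans (h.radialForce_mono ht.1 hv (hv'.trans h.m_lt.le))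
  have hK : 0 ≤ weightedCos N η χ m := mul_nonneg (pow_nonneg (h.cos_two_mul_pos m).le N)
    (h.cos_χ_nonneg ⟨h.m_pos.le, h.m_lt.le⟩)
  have hv : ∀ v ∈ Ioo t m, v ∈ Icc 0 m ∧ v ∈ Icc 0 T := fun v hv =>
    have h0 := ht.1.trans hv.1.le
    ⟨⟨h0, hv.2.le⟩, h0, hv.2.le.trans h.m_lt.le⟩
  have hgain := h.mul_logSec_sub_le hN (d := (2 * N + 1) / 2) ht.2 (by positivity) hK
    (fun v hv' => h.η_nonneg (hv v hv').2) (fun v hv' => h.cos_χ_nonneg (hv v hv').2)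
    (fun v hv' => h.sin_χ_nonpos (hv v hv').1)
    (fun v hv' => by linarith [h.radialForce_mono (hv v hv').1.1 hv'.2.le h.m_lt.le])
    (fun v hv' => h.weightedCos_ge hv'.2.le fun w hw => hF w (hv'.1.trans hw.1).le hw.2.le)
  calc weightedCos N η χ m
      = sweepGain N * (2 * ((2 * N + 1) / 2) * weightedCos N η χ m * j) := by
        linear_combination -weightedCos N η χ m * hj
    _ ≤ sweepGain N * (2 * ((2 * N + 1) / 2) * weightedCos N η χ m *
          (logSec η m - logSec η t)) := by gcongr
    _ ≤ sweepGain N * radialForce N (s m) := by gcongr; linarith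

lemma χ_T_eq_of_near_sphere {L j : ℝ} (hN : 1 ≤ N)
    (hj : (2 * N + 1) * sweepGain N * j = 1) (hL : L = -log (cos (π / 4)) / 2 + 2 * j)
    (hβ : -radialForce N a ≤ cos (π / 4) ^ N / 2)
    (hκ : -radialForce N a ≤ sweepGain N * ((2 * N + 1) / 2))
    (hexp : -radialForce N a ≤ exp (-2 * L) ^ N) (hηT : η T = 0) : χ T = π / 2 := by
  refine h.χ_T_le.eq_of_not_lt fun hχT => ?_
  obtain ⟨hηm, t, ht, hFt, hJ⟩ := h.exists_radialForce_nonneg hN hj hL hβ hexp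
  have hsweep := h.sweepGain_mul_lt_weightedCos hβ hηm.le
    (hFt.trans (h.radialForce_mono ht.1 ht.2 h.m_lt.le)) hηT hχT
  have hKm := h.weightedCos_le_neg_radialForce (t := m) ⟨h.m_pos.le, le_rfl⟩
  have hFm : radialForce N (s m) < (2 * N + 1) / 2 :=
    lt_of_mul_lt_mul_left (hsweep.trans_le (hKm.trans hκ)) (sweepGain_pos N).le
  exact hsweep.not_ge (h.weightedCos_le_sweepGain_mul hN hj ht hFt hJ hFm.le)

end IsArch

lemma exists_near_sphere {N : ℕ} (hN : 1 ≤ N) : ∃ a, radialForce N a < 0 ∧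
    ∀ m T s η χ, IsArch N a m T s η χ → η T = 0 → χ T = π / 2 := by
  have hβ : 0 < cos (π / 4) := by rw [cos_pi_div_four]; positivity
  have hc := sweepGain_pos N
  obtain ⟨j, hj⟩ : ∃ j, (2 * N + 1) * sweepGain N * j = 1 :=
    ⟨_, mul_inv_cancel₀ (by positivity)⟩
  set L := -log (cos (π / 4)) / 2 + 2 * j with hL
  obtain ⟨δ, hδ, hδβ, hδκ, hδL⟩ : ∃ δ > 0, δ ≤ cos (π / 4) ^ N / 2 ∧
      δ ≤ sweepGain N * ((2 * N + 1) / 2) ∧ δ ≤ exp (-2 * L) ^ N :=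
    ⟨min (cos (π / 4) ^ N / 2) (min (sweepGain N * ((2 * N + 1) / 2)) (exp (-2 * L) ^ N)),
      by positivity, min_le_left _ _, (min_le_right _ _).trans (min_le_left _ _),
      (min_le_right _ _).trans (min_le_right _ _)⟩
  obtain ⟨a, ha⟩ := exists_radialForce_eq (N := N) (y := -δ) (by linarith)
  refine ⟨a, by linarith, fun m T s η χ h hηT => ?_⟩
  rw [← neg_neg δ, ← ha] at hδβ hδκ hδL
  exact h.χ_T_eq_of_near_sphere hN hj hL hδβ hδκ hδL hηT

end NearSphere

section FarFromSphere

lemma tan_le_two_mul {x : ℝ} (hx : 0 ≤ x) (hx' : x ≤ π / 4) : tan x ≤ 2 * x := by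
  have hcos : 1 / 2 ≤ cos x := cos_pi_div_three ▸
    cos_le_cos_of_nonneg_of_le_pi hx (by linarith [pi_pos]) (by linarith [pi_pos])
  rw [tan_eq_sin_div_cos, div_le_iff₀ (by linarith)]
  nlinarith [sin_le hx]

lemma tan_le_one {x : ℝ} (hx : 0 ≤ x) (hx' : x ≤ π / 4) : tan x ≤ 1 :=
  tan_pi_div_four ▸ strictMonoOn_tan.monotoneOn ⟨by linarith [pi_pos], by linarith [pi_pos]⟩
    ⟨by linarith [pi_pos], by linarith [pi_pos]⟩ hx'

lemma radialWeight_le_of_radialForce_nonpos {N : ℕ} {S s : ℝ} (hS : radialForce N S ≤ 0)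
    (hSs : S ≤ s) : radialWeight N s ≤ radialWeight N S := by
  have hexp : exp (2 * S) * (1 + 2 * (s - S)) ≤ exp (2 * s) := by
    rw [show 2 * s = 2 * S + 2 * (s - S) by ring, exp_add]
    gcongr
    linarith [add_one_le_exp (2 * (s - S))]
  have : (2 * N + 1) * (s - S) ≤ exp (2 * S) / 2 * (s - S) := by
    unfold radialForce at hS
    gcongr
    linarith
  refine exp_le_exp.2 ?_
  linarith

lemma exists_radialWeight_mul_exp_lt (N : ℕ) (b : ℝ) {δ : ℝ} (hδ : 0 < δ) :
    ∃ a ≥ b, radialWeight N a * exp (2 * a) < δ := by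
  set a := max b (max (4 * N + 8) (1 - log δ))
  have h₁ : (4 * N + 8 : ℝ) ≤ a := (le_max_left _ _).trans (le_max_right _ _)
  have h₂ : 1 - log δ ≤ a := (le_max_right _ _).trans (le_max_right _ _)
  have : 0 ≤ a := le_trans (by positivity) h₁
  refine ⟨a, le_max_left _ _, ?_⟩
  rw [radialWeight, ← exp_add, ← lt_log_iff_exp_lt hδ]
  have := quadratic_le_exp_of_nonneg (show 0 ≤ 2 * a by positivity)
  nlinarith

lemma ProfileOrbit.mul_sub_le_weightedSin_sub {N : ℕ} {s η χ : ℝ → ℝ} (h : ProfileOrbit N s η χ)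
    {a b A e : ℝ} (hab : a ≤ b) (hA : 0 ≤ A) (he : 0 ≤ e)
    (hA' : ∀ t ∈ Ioo a b, A ≤ radialWeight N (s t)) (hη : ∀ t ∈ Ioo a b, e ≤ η t)
    (hχ : ∀ t ∈ Ioo a b, 1 / 2 ≤ cos (χ t)) :
    2 * N * A * e * (s a - s b) ≤ weightedSin N s χ b - weightedSin N s χ a := by
  have hgrow := (h.rate_s.const_mul (-(2 * N * A * e))).sub_le_sub h.rate_weightedSin
    h.clockSpeed_pos hab fun t ht => ?_
  · linarith
  have hηt := hη t ht
  have hcos := hχ t ht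
  have htan : 2 * e ≤ tan (2 * η t) := (mul_le_mul_of_nonneg_left hηt two_pos.le).trans <|
    le_tan (by linarith) (by linarith [(abs_lt.1 (h.abs_η_lt t)).2])
  calc -(2 * N * A * e) * -cos (χ t) = 2 * N * A * (2 * e) * (1 / 2 * cos (χ t)) := by ring
    _ ≤ 2 * N * radialWeight N (s t) * tan (2 * η t) * (cos (χ t) * cos (χ t)) := by
      have := hA.trans (hA' t ht)
      have : 0 ≤ tan (2 * η t) := h.tan_two_mul_nonneg (he.trans hηt)
      gcongr
      exact hA' t ht
    _ = _ := by ring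

lemma half_le_cos {x : ℝ} (hcos : 0 ≤ cos x) (hsin : |sin x| ≤ 1 / 2) : 1 / 2 ≤ cos x := by
  nlinarith [sin_sq_add_cos_sq x, sq_abs (sin x), abs_nonneg (sin x)]

namespace IsArch

variable {N : ℕ} {a m T : ℝ} {s η χ : ℝ → ℝ} (h : IsArch N a m T s η χ) {t u S : ℝ}
include h

lemma mem_Icc_zero_T (ht : t ∈ Icc 0 m) : t ∈ Icc 0 T := ⟨ht.1, ht.2.trans h.m_lt.le⟩

lemma neg_radialForce_mul_η_le (ht : t ∈ Icc 0 m) (hS : S ≤ s t) :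
    -radialForce N S * η t ≤ χ t + π / 2 := by
  have hgrow := (h.rate_η.const_mul (-radialForce N S)).sub_le_sub h.rate_χ h.clockSpeed_pos ht.1
    fun v hv => ?_
  · rw [h.η_zero, h.χ_zero] at hgrow
    linarith
  have hv' : v ∈ Icc 0 m := ⟨hv.1.le, hv.2.le.trans ht.2⟩
  have hF : radialForce N (s v) ≤ radialForce N S := (strictAnti_radialForce N).antitone <|
    hS.trans (h.s_anti hv.1.le hv.2.le (ht.2.trans h.m_lt.le))
  have hcos := h.cos_χ_nonneg (h.mem_Icc_zero_T hv')
  have htan := h.tan_two_mul_nonneg (h.η_nonneg (h.mem_Icc_zero_T hv'))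
  have : 0 ≤ 2 * N * tan (2 * η v) * cos (χ v) := by positivity
  nlinarith [h.sin_χ_nonpos hv']

lemma neg_radialWeight_le (ht : t ∈ Icc 0 T) : -radialWeight N a ≤ weightedSin N s χ t := by
  simpa [weightedSin, h.χ_zero, h.s_zero] using h.weightedSin_le ht.1
    fun v hv => h.η_nonneg ⟨hv.1.le, hv.2.le.trans ht.2⟩

lemma η_le_pi_div_eight (ht : t ∈ Icc 0 m) (hS : 4 ≤ -radialForce N S) (hSt : S ≤ s t) :
    η t ≤ π / 8 := by
  have := h.neg_radialForce_mul_η_le ht hSt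
  nlinarith [(h.χ_mem_Icc_of_le ht).2, h.η_nonneg (h.mem_Icc_zero_T ht)]

lemma neg_half_le_sin_χ (ht : t ∈ Icc 0 T) (hA : 2 * radialWeight N a ≤ radialWeight N (s t)) :
    -(1 / 2) ≤ sin (χ t) := by
  have hM := h.neg_radialWeight_le ht
  have := radialWeight_pos N (s t)
  unfold weightedSin at hM
  nlinarith

/-- The angle `χ` cannot turn by `π / 4` unless `η` has become nonnegligible. -/
lemma exp_neg_le_η (ht : t ∈ Icc 0 m) (hη : η t ≤ π / 8) (hsin : -(1 / 2) ≤ sin (χ t)) :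
    exp (-2 * a) ≤ η t := by
  have hχ : -(π / 4) ≤ χ t := by
    have hmem := h.χ_mem_Icc_of_le ht
    have : -(π / 6) ≤ χ t := (strictMonoOn_sin.le_iff_le
      ⟨by linarith [pi_pos], by linarith [pi_pos]⟩ ⟨hmem.1, by linarith [hmem.2, pi_pos]⟩).1
      (by simpa [sin_pi_div_six] using hsin)
    linarith [pi_pos]
  obtain ⟨c, hc, hχc, hfirst⟩ :=
    exists_first_mem (isClosed_le continuous_const h.continuous_χ) ht.1 hχ
  have hgrow := h.rate_χ.sub_le_sub (h.rate_η.const_mul (exp (2 * a) / 2)) h.clockSpeed_pos hc.1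
    fun v hv => ?_
  · have hχc' : -(π / 4) ≤ χ c := hχc
    have hηct := h.η_mono hc.1 hc.2 ht.2
    rw [h.η_zero, h.χ_zero] at hgrow
    rw [neg_mul, exp_neg, inv_le_iff_one_le_mul₀ (exp_pos _)]
    nlinarith [exp_pos (2 * a), pi_gt_three]
  have hv' : v ∈ Icc 0 m := ⟨hv.1.le, hv.2.le.trans (hc.2.trans ht.2)⟩
  have hvT := h.mem_Icc_zero_T hv'
  have hF := h.radialForce_ge hvT
  have hχv : χ v < -(π / 4) := not_le.1 (hfirst v ⟨hv.1.le, hv.2⟩)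
  have hηv : η v ≤ π / 8 := (h.η_mono hv.1.le (hv.2.le.trans hc.2) ht.2).trans hη
  have htan : tan (2 * η v) ≤ 1 := tan_le_one (by linarith [h.η_nonneg hvT]) (by linarith)
  have hcos := h.cos_χ_nonneg hvT
  have hcossin : cos (χ v) ≤ -sin (χ v) := by
    rw [← cos_add_pi_div_two, ← cos_neg (χ v)]
    have := (h.χ_mem_Icc_of_le hv').1
    exact cos_le_cos_of_nonneg_of_le_pi (by linarith) (by linarith) (by linarith)
  calc radialForce N (s v) * sin (χ v) + 2 * N * tan (2 * η v) * cos (χ v)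
      ≤ -radialForce N (s v) * -sin (χ v) + 2 * N * 1 * -sin (χ v) := by
        rw [neg_mul_neg]; gcongr
    _ ≤ exp (2 * a) / 2 * -sin (χ v) := by
      rw [← add_mul]
      gcongr
      · exact hcos.trans hcossin
      · unfold radialForce at hF ⊢; linarith

lemma le_s_m (hN : 1 ≤ N) (hS : 4 ≤ -radialForce N S) (hSa : S + 2 ≤ a)
    (ha : radialWeight N a * exp (2 * a) < radialWeight N (S + 2))
    (ha' : 2 * radialWeight N a ≤ radialWeight N (S + 2)) : S + 1 ≤ s m := by
  by_contra! hsm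
  obtain ⟨v, hv, hsv⟩ := intermediate_value_Icc' h.m_pos.le h.continuous_s.continuousOn
    (show S + 2 ∈ Icc (s m) (s 0) from ⟨by linarith, by rwa [h.s_zero]⟩)
  obtain ⟨w, hw, hsw⟩ := intermediate_value_Icc' hv.2 h.continuous_s.continuousOn
    (show S + 1 ∈ Icc (s m) (s v) from ⟨hsm.le, by linarith⟩)
  have hw0 : w ∈ Icc 0 m := ⟨hv.1.trans hw.1, hw.2⟩
  have hweight : ∀ t ∈ Icc v w, radialWeight N (S + 2) ≤ radialWeight N (s t) := fun t ht => by
    have hst : s t ≤ S + 2 := hsv ▸ h.s_anti hv.1 ht.1 (ht.2.trans (hw.2.trans h.m_lt.le))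
    have hst' : S + 1 ≤ s t := hsw ▸ h.s_anti (hv.1.trans ht.1) ht.2 (hw.2.trans h.m_lt.le)
    refine radialWeight_le_of_radialForce_nonpos ?_ hst
    exact ((strictAnti_radialForce N).antitone (by linarith)).trans
      (by linarith : radialForce N S ≤ 0)
  have hsin : ∀ t ∈ Icc v w, -(1 / 2) ≤ sin (χ t) := fun t ht =>
    h.neg_half_le_sin_χ (h.mem_Icc_zero_T ⟨hv.1.trans ht.1, ht.2.trans hw.2⟩)
      (ha'.trans (hweight t ht))
  have hηv := h.exp_neg_le_η hv (h.η_le_pi_div_eight hv hS (by linarith)) (hsin v ⟨le_rfl, hw.1⟩)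
  have hgrow := h.mul_sub_le_weightedSin_sub hw.1 (radialWeight_pos N _).le (exp_pos _).le
    (fun t ht => hweight t (Ioo_subset_Icc_self ht))
    (fun t ht => hηv.trans (h.η_mono hv.1 ht.1.le (ht.2.le.trans hw.2)))
    (fun t ht => by
      have ht' : t ∈ Icc 0 m := ⟨hv.1.trans ht.1.le, ht.2.le.trans hw.2⟩
      refine half_le_cos (h.cos_χ_nonneg (h.mem_Icc_zero_T ht')) ?_
      exact abs_le.2 ⟨hsin t (Ioo_subset_Icc_self ht), by linarith [h.sin_χ_nonpos ht']⟩)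
  have hMv := h.neg_radialWeight_le (h.mem_Icc_zero_T hv)
  have hMw : weightedSin N s χ w ≤ 0 :=
    mul_nonpos_of_nonneg_of_nonpos (radialWeight_pos N _).le (h.sin_χ_nonpos hw0)
  have hN' : (1 : ℝ) ≤ N := mod_cast hN
  have hcontra : radialWeight N (S + 2) * exp (-2 * a) ≤ radialWeight N a := by
    have hpos := mul_pos (radialWeight_pos N (S + 2)) (exp_pos (-2 * a))
    rw [hsv, hsw] at hgrow
    nlinarith
  rw [neg_mul, exp_neg, ← div_eq_mul_inv, div_le_iff₀ (exp_pos _)] at hcontra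
  linarith

end IsArch

lemma exists_far {N : ℕ} (hN : 1 ≤ N) {ε : ℝ} (hε : 0 < ε) (S : ℝ) : ∃ a, radialForce N a < 0 ∧
    ∀ m T s η χ, IsArch N a m T s η χ → S ≤ s m ∧ η m ≤ ε := by
  obtain ⟨S₀, hS₀⟩ := exists_radialForce_eq (N := N) (y := -(4 + π / ε))
    (lt_of_lt_of_le (neg_neg_of_pos (by positivity)) (by positivity))
  set R := max S S₀
  have hFR : 4 + π / ε ≤ -radialForce N R := by
    linarith [(strictAnti_radialForce N).antitone (le_max_right S S₀)]
  have hA := radialWeight_pos N (R + 2)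
  obtain ⟨a, ha, haA⟩ := exists_radialWeight_mul_exp_lt N (max 0 (R + 2)) (half_pos hA)
  have ha0 : 0 ≤ a := (le_max_left _ _).trans ha
  have haR : R + 2 ≤ a := (le_max_right _ _).trans ha
  have hexp : radialWeight N a ≤ radialWeight N a * exp (2 * a) :=
    le_mul_of_one_le_right (radialWeight_pos N a).le (one_le_exp (by positivity))
  have hπε : 0 < π / ε := by positivity
  refine ⟨a, ?_, fun m T s η χ h => ?_⟩
  · linarith [(strictAnti_radialForce N).antitone (show R ≤ a by linarith)]
  have hsm := h.le_s_m hN (S := R) (by linarith) haR (by linarith) (by linarith)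
  refine ⟨by linarith [le_max_left S S₀], ?_⟩
  have hη := h.neg_radialForce_mul_η_le (t := m) (S := R) ⟨h.m_pos.le, le_rfl⟩ (by linarith)
  rw [h.χ_m] at hη
  have : π / ε * η m ≤ π := by nlinarith [h.η_m_pos, pi_pos]
  rwa [div_mul_eq_mul_div, div_le_iff₀ hε, mul_le_mul_iff_right₀ pi_pos] at this

end FarFromSphere

section ThinArches

lemma radialForce_nonpos {N : ℕ} {S s : ℝ} (hS : 64 * (2 * N + 1) ≤ exp (2 * S)) (hs : S ≤ s) :
    radialForce N s ≤ 0 := by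
  have : exp (2 * S) ≤ exp (2 * s) := by gcongr
  unfold radialForce
  linarith [Nat.cast_nonneg (α := ℝ) N]

lemma radialWeight_le_exp_mul (N : ℕ) (s : ℝ) : radialWeight N s ≤ exp ((2 * N + 1) * s) :=
  exp_le_exp.2 (sub_le_self _ (by positivity))

namespace IsArch

variable {N : ℕ} {a m T : ℝ} {s η χ : ℝ → ℝ} (h : IsArch N a m T s η χ) {t S : ℝ}
include h

lemma mem_Icc_zero_T_of_ge (ht : t ∈ Icc m T) : t ∈ Icc 0 T := ⟨h.m_pos.le.trans ht.1, ht.2⟩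

lemma weightedSin_rate_le (hη : η m ≤ π / 8) (ht : t ∈ Icc 0 T) :
    2 * N * radialWeight N (s t) * tan (2 * η t) * cos (χ t) ^ 2 ≤
      8 * N * η m * radialWeight N (s t) * cos (χ t) := by
  have hηt := h.η_nonneg ht
  have hηm := h.η_le_η_m ht
  have htan : tan (2 * η t) ≤ 4 * η m :=
    (tan_le_two_mul (by linarith) (by linarith)).trans (by linarith)
  have hA := radialWeight_pos N (s t)
  have hcos := h.cos_χ_nonneg ht
  calc 2 * N * radialWeight N (s t) * tan (2 * η t) * cos (χ t) ^ 2
      ≤ 2 * N * radialWeight N (s t) * (4 * η m) * cos (χ t) := by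
        have := h.η_m_pos
        gcongr
        exact pow_le_of_le_one hcos (cos_le_one _) two_ne_zero
    _ = _ := by ring

lemma sin_χ_le (hS : 4 * (2 * N + 1) ≤ exp (2 * S)) (hη : η m ≤ π / 8) (ht : t ∈ Icc m T)
    (hst : S ≤ s t) : sin (χ t) ≤ 32 * N * η m * exp (-2 * s t) := by
  have hgrow := h.rate_weightedSin.sub_le_sub
    ((h.rate_radialWeight.mul (h.rate_exp_mul (-2))).const_mul (32 * N * η m)) h.clockSpeed_pos
    ht.1 fun v hv => ?_
  · have hA := radialWeight_pos N (s t)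
    have hm : 0 ≤ 32 * N * η m * (radialWeight N (s m) * exp (-2 * s m)) := by
      have := h.η_m_pos
      have := radialWeight_pos N (s m)
      positivity
    simp only [weightedSin, h.χ_m, sin_zero, mul_zero] at hgrow
    exact le_of_mul_le_mul_left (by linarith) hA
  have hvT := h.mem_Icc_zero_T_of_ge ⟨hv.1.le, hv.2.le.trans ht.2⟩
  have hexp : exp (2 * S) ≤ exp (2 * s v) := by
    have := h.s_anti hvT.1 hv.2.le ht.2
    gcongr
    linarith
  have hF : exp (2 * s v) / 4 ≤ 2 - radialForce N (s v) := by
    unfold radialForce; linarith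
  have hexp' : exp (2 * s v) * exp (-2 * s v) = 1 := by rw [← exp_add]; simp
  have hcos := h.cos_χ_nonneg hvT
  have hA := radialWeight_pos N (s v)
  have he := h.η_m_pos
  calc 2 * N * radialWeight N (s v) * tan (2 * η v) * cos (χ v) ^ 2
      ≤ 8 * N * η m * radialWeight N (s v) * cos (χ v) := h.weightedSin_rate_le hη hvT
    _ = 32 * N * η m * (radialWeight N (s v) * cos (χ v)) *
          (exp (2 * s v) / 4 * exp (-2 * s v)) := by
        linear_combination -(8 * N * η m * radialWeight N (s v) * cos (χ v)) * hexp'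
    _ ≤ 32 * N * η m * (radialWeight N (s v) * cos (χ v)) *
          ((2 - radialForce N (s v)) * exp (-2 * s v)) := by gcongr
    _ = _ := by ring

lemma mul_exp_neg_two_mul_s_le (hS : 64 * (2 * N + 1) ≤ exp (2 * S)) (hst : S ≤ s t) :
    32 * N * η m * exp (-2 * s t) ≤ η m / 4 := by
  have hexp : exp (2 * S) ≤ exp (2 * s t) := by gcongr
  have he := h.η_m_pos
  rw [neg_mul, exp_neg, ← div_eq_mul_inv, div_le_iff₀ (exp_pos _)]
  nlinarith

lemma sin_χ_le_quarter (hS : 64 * (2 * N + 1) ≤ exp (2 * S)) (hη : η m ≤ π / 8) (ht : t ∈ Icc m T)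
    (hst : S ≤ s t) : sin (χ t) ≤ η m / 4 := by
  exact (h.sin_χ_le (by linarith) hη ht hst).trans (h.mul_exp_neg_two_mul_s_le hS hst)

lemma half_le_cos_χ (hS : 64 * (2 * N + 1) ≤ exp (2 * S)) (hη : η m ≤ π / 8) (ht : t ∈ Icc m T)
    (hst : S ≤ s t) : 1 / 2 ≤ cos (χ t) := by
  refine half_le_cos (h.cos_χ_nonneg (h.mem_Icc_zero_T_of_ge ht)) ?_
  rw [abs_of_nonneg (h.sin_χ_nonneg ht)]
  linarith [h.sin_χ_le_quarter hS hη ht hst, pi_lt_four]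

lemma half_η_m_le (hS : 64 * (2 * N + 1) ≤ exp (2 * S)) (hη : η m ≤ π / 8) (ht : t ∈ Icc m T)
    (hst : S ≤ s t) : η m / 2 ≤ η t := by
  have hgrow := ((h.rate_exp_mul (-2)).const_mul (-(32 * N * η m))).sub_le_sub h.rate_η
    h.clockSpeed_pos ht.1 fun v hv => ?_
  · have : 0 ≤ 32 * N * η m * exp (-2 * s m) := by
      have := h.η_m_pos
      positivity
    linarith [h.mul_exp_neg_two_mul_s_le hS hst, h.η_m_pos]
  have hvm : v ∈ Icc m T := ⟨hv.1.le, hv.2.le.trans ht.2⟩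
  have hsv : S ≤ s v := hst.trans (h.s_anti (h.mem_Icc_zero_T_of_ge hvm).1 hv.2.le ht.2)
  have hsin := h.sin_χ_le (by linarith) hη hvm hsv
  have hcos := h.half_le_cos_χ hS hη hvm hsv
  have : 0 ≤ 32 * N * η m * exp (-2 * s v) := by
    have := h.η_m_pos
    positivity
  nlinarith

lemma mul_η_m_le_weightedSin (hS : 64 * (2 * N + 1) ≤ exp (2 * S)) (hη : η m ≤ π / 8)
    (hSm : S + 1 ≤ s m) (ht : t ∈ Icc m T) (hst : s t = S) :
    N * radialWeight N (S + 1) * η m ≤ weightedSin N s χ t := by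
  obtain ⟨w, hw, hsw⟩ := intermediate_value_Icc' ht.1 h.continuous_s.continuousOn
    (show S + 1 ∈ Icc (s t) (s m) from ⟨by linarith, hSm⟩)
  have hS' : ∀ v ∈ Ioo w t, S ≤ s v ∧ s v ≤ S + 1 := fun v hv => by
    have hw0 := h.m_pos.le.trans hw.1
    exact ⟨hst ▸ h.s_anti (hw0.trans hv.1.le) hv.2.le ht.2,
      hsw ▸ h.s_anti hw0 hv.1.le (hv.2.le.trans ht.2)⟩
  have hmem : ∀ v ∈ Ioo w t, v ∈ Icc m T := fun v hv => ⟨hw.1.trans hv.1.le, hv.2.le.trans ht.2⟩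
  have hgrow := h.mul_sub_le_weightedSin_sub (A := radialWeight N (S + 1)) (e := η m / 2) hw.2
    (radialWeight_pos N _).le (half_pos h.η_m_pos).le
    (fun v hv => radialWeight_le_of_radialForce_nonpos (radialForce_nonpos hS (hS' v hv).1)
      (hS' v hv).2)
    (fun v hv => h.half_η_m_le hS hη (hmem v hv) (hS' v hv).1)
    (fun v hv => h.half_le_cos_χ hS hη (hmem v hv) (hS' v hv).1)
  have hMw : 0 ≤ weightedSin N s χ w :=
    mul_nonneg (radialWeight_pos N _).le (h.sin_χ_nonneg ⟨hw.1, hw.2.trans ht.2⟩)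
  rw [hst, hsw] at hgrow
  linarith

lemma weightedSin_T_le (hS : 64 * (2 * N + 1) ≤ exp (2 * S)) (hη : η m ≤ π / 8)
    (ht : t ∈ Icc m T) (hst : s t = S) :
    weightedSin N s χ T ≤ 5 * η m * exp ((2 * N + 1) * S) := by
  have he := h.η_m_pos
  have hgrow := h.rate_weightedSin.sub_le_sub ((h.rate_exp_mul (2 * N + 1)).const_mul (-(4 * η m)))
    h.clockSpeed_pos ht.2 fun v hv => ?_
  · have hMt : weightedSin N s χ t ≤ exp ((2 * N + 1) * S) * η m := by
      have hsin := h.sin_χ_le_quarter hS hη ht hst.ge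
      have := h.sin_χ_nonneg ht
      unfold weightedSin
      rw [hst]
      gcongr
      exacts [radialWeight_le_exp_mul N S, by linarith]
    have := mul_pos he (exp_pos ((2 * N + 1) * s T))
    rw [hst] at hgrow
    linarith
  have hv' := h.mem_Icc_zero_T_of_ge ⟨ht.1.trans hv.1.le, hv.2.le⟩
  have hcos := h.cos_χ_nonneg hv'
  calc 2 * N * radialWeight N (s v) * tan (2 * η v) * cos (χ v) ^ 2
      ≤ 8 * N * η m * radialWeight N (s v) * cos (χ v) := h.weightedSin_rate_le hη hv'
    _ ≤ 4 * (2 * N + 1) * η m * exp ((2 * N + 1) * s v) * cos (χ v) := by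
      have := radialWeight_le_exp_mul N (s v)
      have := radialWeight_pos N (s v)
      gcongr ?_ * _ * ?_ * _
      linarith
    _ = _ := by ring

lemma exp_neg_mul_s_T_le {c : ℝ} (hc : 0 < c) (ht : t ∈ Icc m T)
    (hM : c * η m ≤ weightedSin N s χ t) :
    exp (-(2 * N + 1) * s T) ≤ (2 * N + 1) / c + exp (-(2 * N + 1) * s t) := by
  have he := h.η_m_pos
  have hgrow := h.rate_η.sub_le_sub
    ((h.rate_exp_mul (-(2 * N + 1))).const_mul (-(c * η m / (2 * N + 1)))) h.clockSpeed_pos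
    ht.2 fun v hv => ?_
  · have hηt := h.η_le_η_m (h.mem_Icc_zero_T_of_ge ht)
    have hηT := h.η_T_nonneg
    refine le_of_mul_le_mul_left (a := c * η m / (2 * N + 1)) ?_ (by positivity)
    calc _ ≤ η m + c * η m / (2 * N + 1) * exp (-(2 * N + 1) * s t) := by linarith
      _ = _ := by field_simp
  have hMv : c * η m ≤ weightedSin N s χ v := hM.trans <| h.weightedSin_le hv.1.le fun w hw =>
    h.η_nonneg (h.mem_Icc_zero_T_of_ge ⟨ht.1.trans hw.1.le, hw.2.le.trans hv.2.le⟩)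
  have hsin : c * η m * exp (-(2 * N + 1) * s v) ≤ sin (χ v) := by
    rw [neg_mul, exp_neg, ← div_eq_mul_inv, div_le_iff₀' (exp_pos _)]
    refine hMv.trans ?_
    have := h.sin_χ_nonneg ⟨ht.1.trans hv.1.le, hv.2.le⟩
    unfold weightedSin
    gcongr
    exact radialWeight_le_exp_mul N (s v)
  calc -sin (χ v) ≤ -(c * η m * exp (-(2 * N + 1) * s v) * cos (χ v)) := by
        refine neg_le_neg ((mul_le_of_le_one_right (by positivity) (cos_le_one _)).trans hsin)
    _ = _ := by field_simp

lemma χ_T_lt_of_thin {c : ℝ} (hN : 1 ≤ N) (hS : 64 * (2 * N + 1) ≤ exp (2 * S))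
    (hc : c = N * radialWeight N (S + 1)) (hSm : S + 1 ≤ s m) (hη : η m ≤ π / 8)
    (hη' : 5 * η m * exp ((2 * N + 1) * S) * ((2 * N + 1) / c + exp (-(2 * N + 1) * S)) <
      exp (-exp (2 * S) / 4)) : χ T < π / 2 := by
  refine h.χ_T_le.lt_of_ne fun hχT => ?_
  have hsT : s T < S := by
    by_contra! hsT
    exact (radialForce_nonpos hS hsT).not_gt
      (h.toIsShot.radialForce_pos_of_χ_eq h.T_pos h.staysInside hχT)
  obtain ⟨t, ht, hst⟩ := intermediate_value_Icc' h.m_lt.le h.continuous_s.continuousOn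
    (show S ∈ Icc (s T) (s m) from ⟨hsT.le, by linarith⟩)
  have hc0 : 0 < c := hc ▸ mul_pos (mod_cast hN) (radialWeight_pos N _)
  have hsmall := h.exp_neg_mul_s_T_le hc0 ht
    (hc ▸ h.mul_η_m_le_weightedSin hS hη hSm ht hst)
  have hMT := h.weightedSin_T_le hS hη ht hst
  rw [weightedSin, hχT, sin_pi_div_two, mul_one] at hMT
  refine hη'.not_ge ?_
  calc exp (-exp (2 * S) / 4) ≤ exp (-exp (2 * s T) / 4) := by gcongr
    _ = radialWeight N (s T) * exp (-(2 * N + 1) * s T) := by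
      rw [radialWeight, ← exp_add]; congr 1; ring
    _ ≤ _ := by
      have := radialWeight_pos N (s T)
      rw [hst] at hsmall
      gcongr
      exact this.le.trans hMT

end IsArch

lemma exists_far_from_sphere {N : ℕ} (hN : 1 ≤ N) : ∃ a, radialForce N a < 0 ∧
    ∀ m T s η χ, IsArch N a m T s η χ → χ T < π / 2 := by
  obtain ⟨S, hS⟩ : ∃ S, exp (2 * S) = 64 * (2 * N + 1) :=
    ⟨log (64 * (2 * N + 1)) / 2, by rw [mul_div_cancel₀ _ two_ne_zero, exp_log (by positivity)]⟩
  obtain ⟨c, hc⟩ : ∃ c, c = N * radialWeight N (S + 1) := ⟨_, rfl⟩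
  set D := 5 * exp ((2 * N + 1) * S) * ((2 * N + 1) / c + exp (-(2 * N + 1) * S)) with hD
  have hD0 : 0 < D := by
    have : 0 ≤ c := hc ▸ mul_nonneg (Nat.cast_nonneg N) (radialWeight_pos N _).le
    positivity
  obtain ⟨a, ha, hfar⟩ := exists_far hN
    (ε := min (π / 8) (exp (-exp (2 * S) / 4) / 2 / D)) (by positivity) (S + 1)
  refine ⟨a, ha, fun m T s η χ h => ?_⟩
  obtain ⟨hSm, hη⟩ := hfar m T s η χ h
  refine h.χ_T_lt_of_thin hN hS.ge hc hSm (hη.trans (min_le_left _ _)) ?_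
  have hηD := (le_div_iff₀ hD0).1 (hη.trans (min_le_right _ _))
  calc _ = η m * D := by rw [hD]; ring
    _ ≤ exp (-exp (2 * S) / 4) / 2 := hηD
    _ < _ := half_lt_self (exp_pos _)

end ThinArches

section Shooting

/-- The vector field of the profile system in the coordinates `(s, η, χ)` and the clock
`clockSpeed`. The factor `(2N + 3/2) P - 1/2` equals `P * radialForce N s` for
`P = sigmoid (-2s)`. -/
noncomputable def profileField (N : ℕ) (x : ℝ × ℝ × ℝ) : ℝ × ℝ × ℝ :=
  (-(sigmoid (-2 * x.1) * cos (2 * x.2.1) * cos x.2.2),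
    -(sigmoid (-2 * x.1) * cos (2 * x.2.1) * sin x.2.2),
    ((2 * N + 3 / 2) * sigmoid (-2 * x.1) + -(1 / 2)) * cos (2 * x.2.1) * sin x.2.2
      + 2 * N * sigmoid (-2 * x.1) * sin (2 * x.2.1) * cos x.2.2)

lemma sigmoid_mul_radialForce (N : ℕ) (s : ℝ) :
    sigmoid (-2 * s) * radialForce N s = (2 * N + 3 / 2) * sigmoid (-2 * s) + -(1 / 2) := by
  rw [sigmoid_def, neg_mul, neg_neg, radialForce]
  field_simp
  ring

lemma isBoundedLipschitz_profileField (N : ℕ) : IsBoundedLipschitz (profileField N) := by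
  have hscale (c : ℝ) : LipschitzWith ‖c‖₊ fun x : ℝ => c * x := lipschitzWith_smul c
  have hη : LipschitzWith _ fun x : ℝ × ℝ × ℝ => x.2.1 :=
    LipschitzWith.prod_fst.comp LipschitzWith.prod_snd
  have hχ : LipschitzWith _ fun x : ℝ × ℝ × ℝ => x.2.2 :=
    LipschitzWith.prod_snd.comp LipschitzWith.prod_snd
  have hP := isBoundedLipschitz_sigmoid.comp_lipschitz
    ((hscale (-2)).comp (LipschitzWith.prod_fst (α := ℝ) (β := ℝ × ℝ)))
  have hC := isBoundedLipschitz_cos.comp_lipschitz ((hscale 2).comp hη)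
  have hS := isBoundedLipschitz_sin.comp_lipschitz ((hscale 2).comp hη)
  have hcos := isBoundedLipschitz_cos.comp_lipschitz hχ
  have hsin := isBoundedLipschitz_sin.comp_lipschitz hχ
  exact ((hP.mul hC).mul hcos).neg.prodMk <| ((hP.mul hC).mul hsin).neg.prodMk <|
    (((((IsBoundedLipschitz.const _).mul hP).add (.const _)).mul hC).mul hsin).add
      ((((IsBoundedLipschitz.const _).mul hP).mul hS).mul hcos)

lemma contDiff_profileField (N : ℕ) : ContDiff ℝ (⊤ : ℕ∞) (profileField N) := by
  have hP : ContDiff ℝ (⊤ : ℕ∞) fun x : ℝ × ℝ × ℝ => sigmoid (-2 * x.1) :=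
    (contDiff_sigmoid.of_le le_top).comp (by fun_prop)
  unfold profileField
  fun_prop

lemma profileOrbit_of_isIntegralCurve {N : ℕ} {γ : ℝ → ℝ × ℝ × ℝ}
    (hγ : IsIntegralCurve γ fun _ => profileField N) (h0 : |(γ 0).2.1| < π / 4) :
    ProfileOrbit N (fun t => (γ t).1) (fun t => (γ t).2.1) (fun t => (γ t).2.2) := by
  have hcont : Continuous fun t => 2 * (γ t).2.1 :=
    continuous_const.mul hγ.continuous.snd.fst
  have h0' : |2 * (γ 0).2.1| < π / 2 := by
    rw [abs_mul, abs_two]; linarith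
  have hs (t : ℝ) : HasDerivAt (fun t => (γ t).1) (profileField N (γ t)).1 t :=
    HasFDerivAt.fst (hγ t)
  have hη' (t : ℝ) : HasDerivAt (fun t => (γ t).2.1) (profileField N (γ t)).2.1 t :=
    HasFDerivAt.fst (HasFDerivAt.snd (hγ t))
  have hχ (t : ℝ) : HasDerivAt (fun t => (γ t).2.2) (profileField N (γ t)).2.2 t :=
    HasFDerivAt.snd (HasFDerivAt.snd (hγ t))
  have hcos (t : ℝ) : 0 < cos (2 * (γ t).2.1) := by
    refine pos_of_hasDerivAt_mul_self (f := fun t => cos (2 * (γ t).2.1))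
      (g := fun t => 2 * sin (2 * (γ t).2.1) * sigmoid (-2 * (γ t).1) * sin (γ t).2.2) ?_
      (fun t => ((hη' t).const_mul 2).cos.congr_deriv ?_) (cos_pos_of_mem_Ioo (abs_lt.1 h0')) t
    · have := hγ.continuous
      have := continuous_sigmoid
      fun_prop
    · simp only [profileField]; ring
  have hη (t : ℝ) : |(γ t).2.1| < π / 4 := by
    have := abs_lt_pi_div_two_of_cos_ne_zero hcont h0' (fun t => (hcos t).ne') t
    rw [abs_mul, abs_two] at this
    linarith
  refine ⟨hη, fun t => (hs t).congr_deriv ?_, fun t => (hη' t).congr_deriv ?_,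
    fun t => (hχ t).congr_deriv ?_⟩
  · simp only [profileField, clockSpeed]; ring
  · simp only [profileField, clockSpeed]; ring
  · have hcos := (hcos t).ne'
    simp only [profileField, clockSpeed, ← sigmoid_mul_radialForce, tan_eq_sin_div_cos]
    field_simp

lemma isShot_of_isIntegralCurve {N : ℕ} {a : ℝ} {γ : ℝ → ℝ × ℝ × ℝ}
    (hγ : IsIntegralCurve γ fun _ => profileField N) (h0 : γ 0 = (a, 0, -(π / 2)))
    (ha : radialForce N a < 0) :
    IsShot N a (fun t => (γ t).1) (fun t => (γ t).2.1) (fun t => (γ t).2.2) where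
  toProfileOrbit := profileOrbit_of_isIntegralCurve hγ (by simp [h0, pi_pos])
  s_zero := by simp [h0]
  η_zero := by simp [h0]
  χ_zero := by simp [h0]
  force_neg := ha

/-- The orbit crosses the diagonal before it turns back to being perpendicular to the rays.
Taking the maximum with `-χ` keeps the first quantity positive at the start, where `η = 0`. -/
def CrossesFirst (η χ : ℝ → ℝ) : Prop :=
  ExitsFirst (fun t => max (η t) (-χ t)) fun t => π / 2 - χ t

/-- The orbit turns back to being perpendicular to the rays before it crosses the diagonal. -/
def TurnsFirst (η χ : ℝ → ℝ) : Prop :=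
  ExitsFirst (fun t => π / 2 - χ t) fun t => max (η t) (-χ t)

namespace IsArch

variable {N : ℕ} {a m T : ℝ} {s η χ : ℝ → ℝ} (h : IsArch N a m T s η χ)
include h

lemma crossesFirst (hη : η T = 0) (hχ : χ T < π / 2) : CrossesFirst η χ := by
  have hsin : 0 < sin (χ T) := h.sin_χ_pos_of_η_eq_zero h.T_pos h.staysInside hη
  have hχT : 0 < χ T := lt_of_le_of_ne (h.χ_mem_Icc_of_ge ⟨h.m_lt.le, le_rfl⟩).1 <| by
    rintro h0; simp [← h0] at hsin
  have hηneg : ∀ᶠ t in nhdsWithin T (Ioi T), η t < 0 := by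
    filter_upwards [eventually_pos_right_of_deriv_pos (h.rate_η T).neg (by simp [hη])
      (by simpa using mul_pos (h.clockSpeed_pos T) hsin)] with t ht
    exact neg_pos.1 ht
  have hχpos : ∀ᶠ t in nhdsWithin T (Ioi T), 0 < χ t :=
    nhdsWithin_le_nhds (h.continuous_χ.continuousAt.eventually_const_lt hχT)
  refine exitsFirst_of_eventually_neg (continuous_const.sub h.continuous_χ) h.T_pos.le
    (fun u hu => sub_pos.2 ?_) ?_
  · rcases hu.1.eq_or_lt with rfl | hu0
    · rw [h.χ_zero]; linarith [pi_pos]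
    · rcases hu.2.eq_or_lt with rfl | huT
      exacts [hχ, h.χ_lt ⟨hu0, huT⟩]
  · filter_upwards [hηneg, hχpos] with t ht ht'
    exact max_lt ht (neg_neg_iff_pos.2 ht')

lemma turnsFirst (hη : 0 < η T) (hχ : χ T = π / 2) : TurnsFirst η χ := by
  have hF := h.radialForce_pos_of_χ_eq h.T_pos h.staysInside hχ
  refine exitsFirst_of_eventually_neg (h.continuous_η.max h.continuous_χ.neg) h.T_pos.le
    (fun u hu => lt_max_iff.2 ?_) ?_
  · rcases hu.1.eq_or_lt with rfl | hu0
    · rw [h.χ_zero]; exact .inr (by linarith [pi_pos])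
    · rcases hu.2.eq_or_lt with rfl | huT
      exacts [.inl hη, .inl (h.η_pos ⟨hu0, huT⟩)]
  · filter_upwards [eventually_pos_right_of_deriv_pos ((h.rate_χ T).sub_const (π / 2))
      (by simp [hχ]) (by simpa [hχ] using mul_pos (h.clockSpeed_pos T) hF)] with t ht
    linarith

end IsArch

lemma exists_continuous_family_isShot (N : ℕ) : ∃ γ : ℝ → ℝ → ℝ × ℝ × ℝ,
    (Continuous fun p : ℝ × ℝ => γ p.1 p.2) ∧ (∀ a, IsIntegralCurve (γ a) fun _ => profileField N) ∧
      ∀ a, radialForce N a < 0 →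
        IsShot N a (fun t => (γ a t).1) (fun t => (γ a t).2.1) fun t => (γ a t).2.2 := by
  obtain ⟨L, K, hbdd, hlip⟩ := isBoundedLipschitz_profileField N
  choose Φ h0 hΦ using exists_isIntegralCurve ⟨L, K, hbdd, hlip⟩
  refine ⟨fun a => Φ (a, 0, -(π / 2)), ?_, fun a => hΦ _,
    fun a ha => isShot_of_isIntegralCurve (hΦ _) (h0 _) ha⟩
  exact (continuous_flow hlip h0 hΦ).comp (f := fun p : ℝ × ℝ => ((p.1, 0, -(π / 2)), p.2))
    (by fun_prop)

lemma exists_closing_isArch {N : ℕ} (hN : 1 ≤ N) :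
    ∃ (γ : ℝ → ℝ × ℝ × ℝ) (a m T : ℝ), IsIntegralCurve γ (fun _ => profileField N) ∧
      IsArch N a m T (fun t => (γ t).1) (fun t => (γ t).2.1) (fun t => (γ t).2.2) ∧
      (γ T).2.1 = 0 ∧ (γ T).2.2 = π / 2 := by
  obtain ⟨γ, hγ, hcurve, hshot⟩ := exists_continuous_family_isShot N
  obtain ⟨b, hb, hturn⟩ := exists_near_sphere hN
  obtain ⟨c, hc, hcross⟩ := exists_far_from_sphere hN
  by_contra! hopen
  have hexit (a : ℝ) (ha : radialForce N a < 0) : ∃ m T, IsArch N a m T (fun t => (γ a t).1)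
      (fun t => (γ a t).2.1) (fun t => (γ a t).2.2) ∧
      ((γ a T).2.1 = 0 ∧ (γ a T).2.2 < π / 2 ∨ 0 < (γ a T).2.1 ∧ (γ a T).2.2 = π / 2) := by
    obtain ⟨m, T, h, hη | hχ⟩ := (hshot a ha).exists_isArch hN
    · exact ⟨m, T, h, .inl ⟨hη, h.χ_T_le.lt_of_ne (hopen _ _ _ _ (hcurve a) h hη)⟩⟩
    · exact ⟨m, T, h, .inr
        ⟨h.η_T_nonneg.lt_of_ne' fun hη => hopen _ _ _ _ (hcurve a) h hη hχ, hχ⟩⟩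
  have hb' : TurnsFirst (fun t => (γ b t).2.1) fun t => (γ b t).2.2 := by
    obtain ⟨m, T, h, ⟨hη, hχ⟩ | ⟨hη, hχ⟩⟩ := hexit b hb
    exacts [absurd (hturn _ _ _ _ _ h hη) hχ.ne, h.turnsFirst hη hχ]
  have hc' : CrossesFirst (fun t => (γ c t).2.1) fun t => (γ c t).2.2 := by
    obtain ⟨m, T, h, ⟨hη, hχ⟩ | ⟨-, hχ⟩⟩ := hexit c hc
    exacts [h.crossesFirst hη hχ, absurd hχ (hcross _ _ _ _ _ h).ne]
  have hS : IsPreconnected {a | radialForce N a < 0} :=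
    (ordConnected_Iio.preimage_anti (strictAnti_radialForce N).antitone).isPreconnected
  obtain ⟨a, ha, hncross, hnturn⟩ := exists_not_exitsFirst (X := ℝ)
    (f := fun a t => max (γ a t).2.1 (-(γ a t).2.2)) (g := fun a t => π / 2 - (γ a t).2.2)
    (by fun_prop) (by fun_prop) hS hc hc' hb hb'
  obtain ⟨m, T, h, ⟨hη, hχ⟩ | ⟨hη, hχ⟩⟩ := hexit a ha
  exacts [hncross (h.crossesFirst hη hχ), hnturn (h.turnsFirst hη hχ)]

end Shooting

section Symmetry

/-- A periodic orbit of the profile system whose trace `(s, η)` is simple, smooth, and symmetric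
about the diagonal `η = 0`. -/
structure ClosedProfileOrbit (N : ℕ) (p : ℝ) (s η χ : ℝ → ℝ) : Prop
    extends ProfileOrbit N s η χ where
  p_pos : 0 < p
  contDiff_s : ContDiff ℝ (⊤ : ℕ∞) s
  contDiff_η : ContDiff ℝ (⊤ : ℕ∞) η
  s_even : s.Even
  η_odd : η.Odd
  s_periodic : s.Periodic p
  η_periodic : η.Periodic p
  injOn : InjOn (fun t => (s t, η t)) (Ico 0 p)

lemma isIntegralCurve_reflect {N : ℕ} {γ : ℝ → ℝ × ℝ × ℝ}
    (hγ : IsIntegralCurve γ fun _ => profileField N) (b : ℝ) {c : ℝ} (hcos : cos c = -1)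
    (hsin : sin c = 0) :
    IsIntegralCurve (fun t => ((γ (b - t)).1, -(γ (b - t)).2.1, c - (γ (b - t)).2.2))
      fun _ => profileField N := by
  intro t
  have hrev : HasDerivAt (fun t => γ (b - t)) (-profileField N (γ (b - t))) t :=
    (HasDerivAt.scomp t (hγ (b - t)) ((hasDerivAt_id t).const_sub b)).congr_deriv
      (neg_one_smul ℝ _)
  have h₁ : HasDerivAt (fun t => (γ (b - t)).1) _ t := HasFDerivAt.fst hrev
  have h₂ : HasDerivAt (fun t => (γ (b - t)).2.1) _ t := HasFDerivAt.fst (HasFDerivAt.snd hrev)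
  have h₃ : HasDerivAt (fun t => (γ (b - t)).2.2) _ t := HasFDerivAt.snd (HasFDerivAt.snd hrev)
  refine (h₁.prodMk (h₂.neg.prodMk (h₃.const_sub c))).congr_deriv ?_
  simp only [profileField, Prod.ext_iff, cos_sub, sin_sub, hcos, hsin, mul_neg, cos_neg, sin_neg]
  simp

lemma reflection_symmetric {N : ℕ} {γ : ℝ → ℝ × ℝ × ℝ}
    (hγ : IsIntegralCurve γ fun _ => profileField N) {b : ℝ} (hη : (γ b).2.1 = 0)
    (hχ : cos (γ b).2.2 = 0) (t : ℝ) :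
    (γ (2 * b - t)).1 = (γ t).1 ∧ (γ (2 * b - t)).2.1 = -(γ t).2.1 := by
  obtain ⟨-, K, -, hlip⟩ := isBoundedLipschitz_profileField N
  have hrefl := isIntegralCurve_reflect hγ (2 * b) (c := 2 * (γ b).2.2)
    (by simp [cos_two_mul, hχ]) (by simp [sin_two_mul, hχ])
  have heq := congrFun (isIntegralCurve_unique hlip hγ hrefl (t₀ := b) (by
    rw [two_mul, add_sub_cancel_right]
    ext
    exacts [rfl, by simp [hη], by simp [two_mul]])) t
  constructor
  · rw [heq]
  · rw [heq, neg_neg]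

namespace IsArch

variable {N : ℕ} {a m T : ℝ} {s η χ : ℝ → ℝ} (h : IsArch N a m T s η χ)
include h

lemma strictAntiOn_s : StrictAntiOn s (Icc 0 T) := fun u hu v hv huv => by
  have := (h.rate_s.const_mul (-1)).lt_of_pos h.clockSpeed_pos huv fun t ht => by
    linarith [h.cos_χ_pos ⟨hu.1.trans_lt ht.1, ht.2.trans_le hv.2⟩]
  linarith

lemma injOn_of_symmetric (hs : ∀ t, s (2 * T - t) = s t) (hη : ∀ t, η (2 * T - t) = -η t) :
    InjOn (fun t => (s t, η t)) (Ico 0 (2 * T)) := by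
  have hneg {t : ℝ} (htT : T < t) (ht : t < 2 * T) : η t < 0 := by
    have := h.η_pos (t := 2 * T - t) ⟨by linarith, by linarith⟩
    rwa [hη, neg_pos] at this
  intro u hu v hv huv
  obtain ⟨hsuv, hηuv⟩ := Prod.mk.inj huv
  rcases le_or_gt u T with huT | huT <;> rcases le_or_gt v T with hvT | hvT
  · exact h.strictAntiOn_s.injOn ⟨hu.1, huT⟩ ⟨hv.1, hvT⟩ hsuv
  · exact absurd (hηuv ▸ h.η_nonneg ⟨hu.1, huT⟩) (hneg hvT hv.2).not_ge
  · exact absurd (hηuv ▸ h.η_nonneg ⟨hv.1, hvT⟩) (hneg huT hu.2).not_ge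
  · have := h.strictAntiOn_s.injOn (x₁ := 2 * T - u) (x₂ := 2 * T - v)
      ⟨by linarith [hu.2], by linarith⟩ ⟨by linarith [hv.2], by linarith⟩ (by rw [hs, hs, hsuv])
    linarith

end IsArch

lemma exists_closedProfileOrbit {N : ℕ} (hN : 1 ≤ N) :
    ∃ p s η χ, ClosedProfileOrbit N p s η χ := by
  obtain ⟨γ, a, m, T, hγ, h, hη, hχ⟩ := exists_closing_isArch hN
  have hsmooth := contDiff_of_isIntegralCurve (contDiff_profileField N) hγ
  have h0 := reflection_symmetric hγ (b := 0) h.η_zero (by simp [h.χ_zero])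
  have hT := reflection_symmetric hγ (b := T) hη (by simp [hχ])
  simp only [mul_zero, zero_sub] at h0
  refine ⟨2 * T, fun t => (γ t).1, fun t => (γ t).2.1, fun t => (γ t).2.2, h.toProfileOrbit,
    by linarith [h.T_pos], hsmooth.fst, hsmooth.snd.fst, fun t => (h0 t).1, fun t => (h0 t).2,
    fun t => ?_, fun t => ?_, h.injOn_of_symmetric (fun t => (hT t).1) fun t => (hT t).2⟩
  · rw [← (h0 t).1, ← (hT (-t)).1, sub_neg_eq_add, add_comm]
  · rw [add_comm, ← sub_neg_eq_add, (hT (-t)).2, (h0 t).2, neg_neg]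

end Symmetry

section CartesianCoordinates

/-- The first Cartesian coordinate of the point with logarithmic polar coordinates `(s, η)`. -/
noncomputable def profileX (s η : ℝ → ℝ) (t : ℝ) : ℝ := exp (s t) * cos (π / 4 + η t)

/-- The second Cartesian coordinate of the point with logarithmic polar coordinates `(s, η)`. -/
noncomputable def profileY (s η : ℝ → ℝ) (t : ℝ) : ℝ := exp (s t) * sin (π / 4 + η t)

/-- The angle between the velocity of the profile curve and the first coordinate axis. -/
noncomputable def directionAngle (η χ : ℝ → ℝ) (t : ℝ) : ℝ := π / 4 + η t + χ t + π

/-- The Cartesian speed of the orbit. -/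
noncomputable def arclengthSpeed (s η : ℝ → ℝ) (t : ℝ) : ℝ := exp (s t) * clockSpeed s η t

/-- The right-hand side of the profile equation with `m = n = N + 1` at the point `(x, y)` in the
direction `(cos α, sin α)`. -/
noncomputable def profileCurvature (N : ℕ) (x y α : ℝ) : ℝ :=
  (x * sin α - cos α * y) / 2 + N * cos α / y - N * sin α / x

lemma cos_div_sin_sub_sin_div_cos {η : ℝ} (hη : |η| < π / 4) (χ : ℝ) :
    cos (π / 4 + η + χ + π) / sin (π / 4 + η) - sin (π / 4 + η + χ + π) / cos (π / 4 + η) =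
      2 * (sin χ + tan (2 * η) * cos χ) := by
  obtain ⟨h₁, h₂⟩ := abs_lt.1 hη
  have hcos : 0 < cos (π / 4 + η) := cos_pos_of_mem_Ioo ⟨by linarith, by linarith⟩
  have hsin : 0 < sin (π / 4 + η) := sin_pos_of_pos_of_lt_pi (by linarith) (by linarith)
  have hprod : sin (π / 4 + η) * cos (π / 4 + η) = cos (2 * η) / 2 := by
    rw [eq_div_iff two_ne_zero, mul_comm, ← mul_assoc, ← sin_two_mul, ← cos_sub_pi_div_two]
    ring_nf
  have hnum : cos (π / 4 + η + χ + π) * cos (π / 4 + η)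
      - sin (π / 4 + η + χ + π) * sin (π / 4 + η) = sin (χ + 2 * η) := by
    rw [← cos_add, ← cos_sub_pi_div_two, ← cos_sub_two_pi]; ring_nf
  have hcos2 : cos (2 * η) ≠ 0 := fun h => (mul_pos hsin hcos).ne' (by rw [hprod, h, zero_div])
  calc _ = sin (χ + 2 * η) / (cos (2 * η) / 2) := by
        rw [div_sub_div _ _ hsin.ne' hcos.ne', mul_comm (sin (π / 4 + η)), hnum, hprod]
    _ = _ := by rw [sin_add, tan_eq_sin_div_cos]; field_simp

lemma profileCurvature_polar (N : ℕ) (s : ℝ) {η : ℝ} (hη : |η| < π / 4) (χ : ℝ) :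
    profileCurvature N (exp s * cos (π / 4 + η)) (exp s * sin (π / 4 + η))
        (π / 4 + η + χ + π) =
      (radialForce N s * sin χ + 2 * N * tan (2 * η) * cos χ - sin χ) / exp s := by
  have hradial : cos (π / 4 + η) * sin (π / 4 + η + χ + π)
      - cos (π / 4 + η + χ + π) * sin (π / 4 + η) = -sin χ := by
    rw [← sin_add_pi, mul_comm (cos (π / 4 + η)), ← sin_sub]; ring_nf
  have hangular := cos_div_sin_sub_sin_div_cos hη χ
  have hexp : exp (2 * s) = exp s * exp s := by rw [two_mul, exp_add]
  calc _ = exp s * (cos (π / 4 + η) * sin (π / 4 + η + χ + π)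
          - cos (π / 4 + η + χ + π) * sin (π / 4 + η)) / 2
        + N / exp s * (cos (π / 4 + η + χ + π) / sin (π / 4 + η)
          - sin (π / 4 + η + χ + π) / cos (π / 4 + η)) := by
        unfold profileCurvature
        generalize π / 4 + η = θ
        generalize θ + χ + π = α
        field_simp
        ring
    _ = _ := by
        rw [hradial, hangular, radialForce, hexp]; field_simp; ring

namespace ProfileOrbit

variable {N : ℕ} {s η χ : ℝ → ℝ} (h : ProfileOrbit N s η χ)
include h

lemma profileX_pos (t : ℝ) : 0 < profileX s η t := by
  obtain ⟨h₁, h₂⟩ := abs_lt.1 (h.abs_η_lt t)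
  exact mul_pos (exp_pos _) (cos_pos_of_mem_Ioo ⟨by linarith, by linarith⟩)

lemma profileY_pos (t : ℝ) : 0 < profileY s η t := by
  obtain ⟨h₁, h₂⟩ := abs_lt.1 (h.abs_η_lt t)
  exact mul_pos (exp_pos _) (sin_pos_of_pos_of_lt_pi (by linarith) (by linarith))

lemma arclengthSpeed_pos (t : ℝ) : 0 < arclengthSpeed s η t :=
  mul_pos (exp_pos _) (h.clockSpeed_pos t)

lemma rate_profileX :
    HasRate (arclengthSpeed s η) (profileX s η) fun t => cos (directionAngle η χ t) := fun t =>
  ((h.rate_s t).exp.mul ((h.rate_η t).const_add (π / 4)).cos).congr_deriv <| by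
    simp only [directionAngle, arclengthSpeed, cos_add_pi, cos_add (π / 4 + η t)]
    ring

lemma rate_profileY :
    HasRate (arclengthSpeed s η) (profileY s η) fun t => sin (directionAngle η χ t) := fun t =>
  ((h.rate_s t).exp.mul ((h.rate_η t).const_add (π / 4)).sin).congr_deriv <| by
    simp only [directionAngle, arclengthSpeed, sin_add_pi, sin_add (π / 4 + η t)]
    ring

lemma rate_directionAngle : HasRate (arclengthSpeed s η) (directionAngle η χ) fun t =>
    profileCurvature N (profileX s η t) (profileY s η t) (directionAngle η χ t) := fun t =>
  ((((h.rate_η t).const_add (π / 4)).add (h.rate_χ t)).add_const π).congr_deriv <| by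
    simp only [profileX, profileY, directionAngle, arclengthSpeed,
      profileCurvature_polar N _ (h.abs_η_lt t)]
    field_simp
    ring

end ProfileOrbit

namespace ClosedProfileOrbit

variable {N : ℕ} {p : ℝ} {s η χ : ℝ → ℝ} (h : ClosedProfileOrbit N p s η χ)
include h

lemma contDiff_profileX : ContDiff ℝ (⊤ : ℕ∞) (profileX s η) :=
  h.contDiff_s.exp.mul (contDiff_const.add h.contDiff_η).cos

lemma contDiff_profileY : ContDiff ℝ (⊤ : ℕ∞) (profileY s η) :=
  h.contDiff_s.exp.mul (contDiff_const.add h.contDiff_η).sin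

lemma contDiff_arclengthSpeed : ContDiff ℝ (⊤ : ℕ∞) (arclengthSpeed s η) :=
  h.contDiff_s.exp.mul <| ((contDiff_sigmoid.of_le le_top).comp
    (contDiff_const.mul h.contDiff_s)).mul (contDiff_const.mul h.contDiff_η).cos

lemma profileX_periodic : (profileX s η).Periodic p := fun t => by
  rw [profileX, profileX, h.s_periodic, h.η_periodic]

lemma profileY_periodic : (profileY s η).Periodic p := fun t => by
  rw [profileY, profileY, h.s_periodic, h.η_periodic]

lemma arclengthSpeed_periodic : (arclengthSpeed s η).Periodic p := fun t => by
  rw [arclengthSpeed, arclengthSpeed, clockSpeed, clockSpeed, h.s_periodic, h.η_periodic]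

lemma profileX_neg (t : ℝ) : profileX s η (-t) = profileY s η t := by
  rw [profileX, profileY, h.s_even, h.η_odd, ← cos_pi_div_two_sub]
  ring_nf

lemma profileY_neg (t : ℝ) : profileY s η (-t) = profileX s η t := by
  rw [← h.profileX_neg, neg_neg]

lemma injOn_profile : InjOn (fun t => (profileX s η t, profileY s η t)) (Ico 0 p) :=
  injOn_polar.comp h.injOn fun t _ => h.abs_η_lt t

end ClosedProfileOrbit

end CartesianCoordinates

end ShrinkerProfile

open Real ShrinkerProfile

/-- For every integer `n ≥ 2` there exist `T > 0` and a smooth `T`-periodic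
unit-speed curve `γ(t) = (x t, y t)` with `x t > 0`, `y t > 0`, injective on `[0, T)`,
solving the self-shrinker profile equation with `m = n`, whose image is invariant under
the reflection `(x, y) ↦ (y, x)`. -/
theorem closed_embedded_shrinker_profile_curve (n : ℕ) (hn : 2 ≤ n) :
    ∃ (T : ℝ) (x y : ℝ → ℝ), 0 < T ∧
      ContDiff ℝ (⊤ : ℕ∞) x ∧ ContDiff ℝ (⊤ : ℕ∞) y ∧
      (∀ t, x (t + T) = x t) ∧ (∀ t, y (t + T) = y t) ∧
      (∀ t, 0 < x t) ∧ (∀ t, 0 < y t) ∧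
      (∀ t, (deriv x t) ^ 2 + (deriv y t) ^ 2 = 1) ∧
      Set.InjOn (fun t => (x t, y t)) (Set.Ico 0 T) ∧
      (∀ t, -(deriv (deriv x) t) * deriv y t + deriv x t * deriv (deriv y) t =
        (x t * deriv y t - deriv x t * y t) / 2
          + ((n : ℝ) - 1) * deriv x t / y t - ((n : ℝ) - 1) * deriv y t / x t) ∧
      (∀ t, ∃ s, x s = y t ∧ y s = x t) := by
  obtain ⟨N, rfl⟩ : ∃ N, n = N + 1 := ⟨n - 1, by omega⟩
  obtain ⟨p, s, η, χ, h⟩ := exists_closedProfileOrbit (N := N) (by omega)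
  obtain ⟨q, T, hT, hq, hq', hqT, hq0⟩ := exists_periodic_reparametrisation h.p_pos
    h.contDiff_arclengthSpeed h.arclengthSpeed_pos h.arclengthSpeed_periodic
  have hx := h.rate_profileX.comp_reparametrisation h.arclengthSpeed_pos hq'
  have hy := h.rate_profileY.comp_reparametrisation h.arclengthSpeed_pos hq'
  have hα := h.rate_directionAngle.comp_reparametrisation h.arclengthSpeed_pos hq'
  have hqp : q T = p := by simpa [hq0] using hqT 0
  refine ⟨T, fun t => profileX s η (q t), fun t => profileY s η (q t), hT,
    h.contDiff_profileX.comp hq, h.contDiff_profileY.comp hq,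
    fun t => by simp only [hqT, h.profileX_periodic (q t)],
    fun t => by simp only [hqT, h.profileY_periodic (q t)],
    fun t => h.profileX_pos _, fun t => h.profileY_pos _, deriv_sq_add_deriv_sq hx hy,
    h.injOn_profile.comp q.injective.injOn fun t ht => ?_, fun t => ?_, fun t => ?_⟩
  · exact ⟨hq0 ▸ q.monotone ht.1, hqp ▸ q.strictMono ht.2⟩
  · rw [curvature_eq_deriv_angle hx hy hα, (hx t).deriv, (hy t).deriv, Nat.cast_succ,
      add_sub_cancel_right, profileCurvature]
  · obtain ⟨u, hu⟩ := q.surjective (-q t)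
    exact ⟨u, by simp only [hu, h.profileX_neg], by simp only [hu, h.profileY_neg]⟩
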